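/- arXiv:1207.0232 — 5 statements merged into one kernel-verified Lean document; each statement's English description precedes it below -/
import Mathlib

section
/- M(x) = x^{1/√e + o(1)} as x → ∞; that is, log M(x)/log x → 1/√e as x → ∞. -/
open Filter Real MeasureTheory
open scoped Classical

/-- The largest prime factor of `n`, with the convention `P 1 = 1`. -/
noncomputable def largestPrimeFactor (n : ℕ) : ℕ :=
  if n ≤ 1 then 1 else n.primeFactors.sup id

/-- `medianLPF x` is the median largest prime factor of the integers in `[1, x]`:
the `⌈N/2⌉`-th smallest element of the multiset `{P(n) : 1 ≤ n ≤ N}` where `N = ⌊x⌋`. -/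
noncomputable def medianLPF (x : ℝ) : ℕ :=
  (((Finset.Icc 1 ⌊x⌋₊).val.map largestPrimeFactor).sort (· ≤ ·)).getD
    ((⌊x⌋₊ + 1) / 2 - 1) 0

/-- `lif x = ∫₂^x {x/t}/log t dt`. -/
noncomputable def lif (x : ℝ) : ℝ := ∫ t in (2:ℝ)..x, Int.fract (x / t) / Real.log t

noncomputable def mc (k : ℕ) : ℝ := if k.Prime then Real.log k / k else 0

lemma mc_sum_Icc (N : ℕ) : ∑ k ∈ Finset.Icc 0 N, mc k
    = ∑ p ∈ Finset.Ioc 0 N with p.Prime, Real.log p / p := by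
  rw [← Finset.add_sum_Ioc_eq_sum_Icc (Nat.zero_le N), Finset.sum_filter]
  simp [mc]

lemma log_factorial_primes (N : ℕ) : Real.log (N.factorial) =
    ∑ p ∈ Finset.Ioc 0 N with p.Prime, (N.factorial.factorization p : ℝ) * Real.log p := by
  have h := Nat.prod_factorization_pow_eq_self (Nat.factorial_ne_zero N)
  rw [Nat.prod_factorization_eq_prod_primeFactors] at h
  conv_lhs => rw [← h]
  push_cast
  rw [Real.log_prod]
  · have : N.factorial.primeFactors = (Finset.Ioc 0 N).filter Nat.Prime := by
      ext p
      simp only [Nat.mem_primeFactors, Finset.mem_filter, Finset.mem_Ioc]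
      constructor
      · rintro ⟨hp, hd, -⟩
        exact ⟨⟨hp.pos, (hp.dvd_factorial).1 hd⟩, hp⟩
      · rintro ⟨⟨_, h⟩, hp⟩
        exact ⟨hp, (hp.dvd_factorial).2 h, Nat.factorial_ne_zero N⟩
    rw [this]
    exact Finset.sum_congr rfl fun p _ => Real.log_pow _ _
  · intro p hp
    have := (Nat.prime_of_mem_primeFactors hp).pos
    positivity

lemma fact_val_ge {N p : ℕ} (hp : p.Prime) (hpN : p ≤ N) :
    (N : ℝ) / p - 1 ≤ (N.factorial.factorization p : ℝ) := by
  have h1 : N / p ≤ N.factorial.factorization p := by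
    rw [Nat.factorization_factorial hp (Nat.lt_succ_self _)]
    have hm : 1 ∈ Finset.Ico 1 (Nat.log p N).succ := by
      have := Nat.log_pos hp.one_lt hpN
      rw [Finset.mem_Ico]; omega
    have := Finset.single_le_sum (f := fun i => N / p ^ i) (fun _ _ => Nat.zero_le _) hm
    simpa using this
  have h2 := Nat.lt_floor_add_one ((N : ℝ) / p)
  rw [Nat.floor_div_eq_div] at h2
  have h3 : ((N / p : ℕ) : ℝ) ≤ (N.factorial.factorization p : ℝ) := by exact_mod_cast h1
  linarith

lemma fact_val_le {N p : ℕ} (hp : p.Prime) :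
    (N.factorial.factorization p : ℝ) ≤ N / p + N * (2 / (p : ℝ) ^ 2) := by
  have := Fact.mk hp
  have h := sub_one_mul_padicValNat_factorial (p := p) N
  rw [← Nat.factorization_def _ hp] at h
  have h2 : (p - 1) * N.factorial.factorization p ≤ N := by rw [h]; exact Nat.sub_le _ _
  have hp2 : (2:ℝ) ≤ p := by exact_mod_cast hp.two_le
  have h3 : ((p:ℝ) - 1) * (N.factorial.factorization p : ℝ) ≤ N := by
    have : (((p - 1 : ℕ) * N.factorial.factorization p : ℕ) : ℝ) ≤ N := by exact_mod_cast h2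
    rw [Nat.cast_mul, Nat.cast_sub hp.one_le] at this
    simpa using this
  have h4 : (N.factorial.factorization p : ℝ) ≤ N / ((p:ℝ) - 1) := by
    rw [le_div_iff₀ (by linarith)]; linarith
  refine h4.trans ?_
  have h5 : 1 / ((p:ℝ) - 1) ≤ 1 / p + 2 / (p:ℝ)^2 := by
    rw [div_add_div _ _ (by positivity) (by positivity), div_le_div_iff₀ (by linarith) (by positivity)]
    nlinarith [mul_nonneg (by linarith : (0:ℝ) ≤ p) (by linarith : (0:ℝ) ≤ p - 2)]
  calc (N:ℝ) / ((p:ℝ) - 1) = N * (1 / ((p:ℝ) - 1)) := by ring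
    _ ≤ N * (1 / p + 2 / (p:ℝ)^2) := by gcongr
    _ = _ := by ring

lemma mertens_nat : ∃ C : ℝ, 0 < C ∧ ∀ N : ℕ, 1 ≤ N →
    |∑ k ∈ Finset.Icc 0 N, mc k - Real.log N| ≤ C := by
  have hs : Summable (fun n : ℕ => (4:ℝ) * (n : ℝ) ^ (-(3/2) : ℝ)) :=
    (Real.summable_nat_rpow.2 (by norm_num)).mul_left 4
  set D := ∑' n : ℕ, (4:ℝ) * (n : ℝ) ^ (-(3/2) : ℝ)
  have hD : 0 ≤ D := tsum_nonneg fun n => by positivity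
  have hl4 : 0 < Real.log 4 := Real.log_pos (by norm_num)
  refine ⟨Real.log 4 + 1 + D, by linarith, fun N hN => ?_⟩
  have hN0 : (0:ℝ) < N := by exact_mod_cast hN
  have hfac := log_factorial_primes N
  rw [mc_sum_Icc]
  set S := ∑ p ∈ Finset.Ioc 0 N with p.Prime, Real.log p / p
  have hθ : ∑ p ∈ Finset.Ioc 0 N with p.Prime, Real.log p ≤ Real.log 4 * N := by
    have := Chebyshev.theta_le_log4_mul_x (x := N) hN0.le
    rw [Chebyshev.theta] at this
    simpa using this
  have up : N * S - ∑ p ∈ Finset.Ioc 0 N with p.Prime, Real.log p ≤ Real.log N.factorial := by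
    rw [hfac, Finset.mul_sum, ← Finset.sum_sub_distrib]
    refine Finset.sum_le_sum fun p hp => ?_
    simp only [Finset.mem_filter, Finset.mem_Ioc] at hp
    have := mul_le_mul_of_nonneg_right (fact_val_ge hp.2 hp.1.2) (Real.log_natCast_nonneg p)
    calc _ = ((N : ℝ) / p - 1) * Real.log p := by ring
      _ ≤ _ := this
  have upf : Real.log N.factorial ≤ N * Real.log N := by
    rw [← Real.log_pow]
    apply Real.log_le_log (by exact_mod_cast Nat.factorial_pos N)
    exact_mod_cast Nat.factorial_le_pow N
  have lowf : N * Real.log N - N ≤ Real.log N.factorial := by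
    have := Stirling.le_log_factorial_stirling (n := N) (by omega)
    have h1 := Real.log_natCast_nonneg N
    have h2 : 0 ≤ Real.log (2 * Real.pi) := Real.log_nonneg (by nlinarith [Real.pi_gt_three])
    linarith
  have low : Real.log N.factorial ≤ N * S + N * D := by
    have : ∑ p ∈ Finset.Ioc 0 N with p.Prime, (4:ℝ) * (p : ℝ) ^ (-(3/2) : ℝ) ≤ D :=
      hs.sum_le_tsum _ (fun n _ => by positivity)
    refine le_trans ?_ (add_le_add_right (mul_le_mul_of_nonneg_left this hN0.le) _)
    rw [hfac, Finset.mul_sum, Finset.mul_sum, ← Finset.sum_add_distrib]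
    refine Finset.sum_le_sum fun p hp => ?_
    simp only [Finset.mem_filter, Finset.mem_Ioc] at hp
    have hp0 : (0:ℝ) < p := by exact_mod_cast hp.1.1
    have h1 := mul_le_mul_of_nonneg_right (fact_val_le (N := N) hp.2) (Real.log_natCast_nonneg p)
    have h2 : 2 / (p:ℝ)^2 * Real.log p ≤ 4 * (p : ℝ) ^ (-(3/2) : ℝ) := by
      have h3 := Real.log_le_rpow_div hp0.le (ε := 1/2) (by norm_num)
      have h4 : (p : ℝ) ^ (-(3/2) : ℝ) = (p:ℝ)^(1/2:ℝ) / (p:ℝ)^2 := by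
        rw [← Real.rpow_natCast (p:ℝ) 2, ← Real.rpow_sub hp0]; norm_num
      rw [h4]
      calc 2 / (p:ℝ)^2 * Real.log p ≤ 2 / (p:ℝ)^2 * ((p:ℝ)^(1/2:ℝ) / (1/2)) := by gcongr
        _ = _ := by ring
    calc _ ≤ _ := h1
      _ = N * (Real.log p / p) + N * (2 / (p:ℝ)^2 * Real.log p) := by ring
      _ ≤ _ := by gcongr
  rw [abs_le]
  constructor
  · have : N * (-(Real.log 4 + 1 + D)) ≤ N * (S - Real.log N) := by nlinarith
    exact le_of_mul_le_mul_left this hN0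
  · have : N * (S - Real.log N) ≤ N * (Real.log 4 + 1 + D) := by nlinarith
    exact le_of_mul_le_mul_left this hN0

lemma mertens_real : ∃ C : ℝ, 0 < C ∧ ∀ t : ℝ, 1 ≤ t →
    |∑ k ∈ Finset.Icc 0 ⌊t⌋₊, mc k - Real.log t| ≤ C := by
  obtain ⟨C, hC, h⟩ := mertens_nat
  have hl2 : 0 < Real.log 2 := Real.log_pos (by norm_num)
  refine ⟨C + Real.log 2, by positivity, fun t ht => ?_⟩
  have hf : 1 ≤ ⌊t⌋₊ := Nat.le_floor (by simpa using ht)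
  have hf' : (1:ℝ) ≤ ⌊t⌋₊ := by exact_mod_cast hf
  have h1 := abs_le.1 (h _ hf)
  have h2 : Real.log ⌊t⌋₊ ≤ Real.log t :=
    Real.log_le_log (by linarith) (Nat.floor_le (by linarith))
  have h3 : Real.log t ≤ Real.log 2 + Real.log ⌊t⌋₊ := by
    rw [← Real.log_mul (by norm_num) (by linarith)]
    apply Real.log_le_log (by linarith)
    have := Nat.lt_floor_add_one t
    linarith
  rw [abs_le]
  constructor <;> linarith [h1.1, h1.2]

lemma mertens_two : ∃ C : ℝ, 0 < C ∧ ∀ a b : ℝ, 1 < a → a ≤ b →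
    |∑ p ∈ Finset.Ioc ⌊a⌋₊ ⌊b⌋₊ with p.Prime, (1:ℝ) / p
      - (Real.log (Real.log b) - Real.log (Real.log a))| ≤ C / Real.log a := by
  obtain ⟨C, hC, h⟩ := mertens_real
  refine ⟨2 * C, by positivity, fun a b ha hab => ?_⟩
  have hla : 0 < Real.log a := Real.log_pos ha
  have hlb : 0 < Real.log b := Real.log_pos (by linarith)
  have hd : ∀ t ∈ Set.Icc a b, HasDerivAt (fun t => 1 / Real.log t) (-(1 / (t * Real.log t ^ 2))) t := by
    intro t ht
    have ht1 : 1 < t := lt_of_lt_of_le ha ht.1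
    have hl := Real.log_pos ht1
    have := (Real.hasDerivAt_log (by linarith : t ≠ 0)).inv hl.ne'
    simp only [one_div]
    refine HasDerivAt.congr_deriv this ?_
    field_simp
  have hcont : ContinuousOn (fun t : ℝ => -(1 / (t * Real.log t ^ 2))) (Set.Icc a b) := by
    intro t ht
    have ht1 : 1 < t := lt_of_lt_of_le ha ht.1
    have hl := Real.log_pos ht1
    have : t ≠ 0 := by linarith
    have h3 : t * Real.log t ^ 2 ≠ 0 := by positivity
    apply ContinuousAt.continuousWithinAt
    fun_prop (disch := assumption)
  have hderiv : Set.EqOn (fun t : ℝ => -(1 / (t * Real.log t ^ 2))) (deriv (fun t => 1 / Real.log t)) (Set.Icc a b) :=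
    fun t ht => ((hd t ht).deriv).symm
  have hint : IntegrableOn (deriv (fun t => 1 / Real.log t)) (Set.Icc a b) :=
    (hcont.integrableOn_Icc).congr_fun hderiv measurableSet_Icc
  have abel := sum_mul_eq_sub_sub_integral_mul mc (f := fun t => 1 / Real.log t) (by linarith : 0 ≤ a) hab
    (fun t ht => (hd t ht).differentiableAt) hint
  have hL : ∑ k ∈ Finset.Ioc ⌊a⌋₊ ⌊b⌋₊, 1 / Real.log k * mc k =
      ∑ p ∈ Finset.Ioc ⌊a⌋₊ ⌊b⌋₊ with p.Prime, (1:ℝ) / p := by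
    rw [Finset.sum_filter]
    refine Finset.sum_congr rfl fun k _ => ?_
    rw [mc]
    split_ifs with hk
    · have : Real.log k ≠ 0 := (Real.log_pos (by exact_mod_cast hk.one_lt)).ne'
      field_simp
    · simp
  beta_reduce at abel
  rw [hL] at abel
  rw [abel]
  have hG : ∀ D : ℝ, ∫ t in a..b, -((Real.log t + D) / (t * Real.log t ^ 2))
      = -((Real.log (Real.log b) - D / Real.log b) - (Real.log (Real.log a) - D / Real.log a)) := by
    intro D
    rw [intervalIntegral.integral_neg]
    congr 1
    apply intervalIntegral.integral_eq_sub_of_hasDerivAt (f := fun t => Real.log (Real.log t) - D / Real.log t)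
    · intro t ht
      rw [Set.uIcc_of_le hab] at ht
      have ht1 : 1 < t := lt_of_lt_of_le ha ht.1
      have hl := Real.log_pos ht1
      have h1 := (Real.hasDerivAt_log (by linarith : t ≠ 0)).log hl.ne'
      have h2 := (hd t ht).const_mul D
      have h3 := h1.sub h2
      simp only [mul_one_div] at h3
      refine HasDerivAt.congr_deriv h3 ?_
      field_simp
      ring
    · apply ContinuousOn.intervalIntegrable
      rw [Set.uIcc_of_le hab]
      intro t ht
      have ht1 : 1 < t := lt_of_lt_of_le ha ht.1
      have hl := Real.log_pos ht1
      have : t ≠ 0 := by linarith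
      have h3 : t * Real.log t ^ 2 ≠ 0 := by positivity
      apply ContinuousAt.continuousWithinAt
      fun_prop (disch := assumption)
  have hGi : ∀ D : ℝ, IntervalIntegrable (fun t => -((Real.log t + D) / (t * Real.log t ^ 2))) volume a b := by
    intro D
    apply ContinuousOn.intervalIntegrable
    rw [Set.uIcc_of_le hab]
    intro t ht
    have ht1 : 1 < t := lt_of_lt_of_le ha ht.1
    have hl := Real.log_pos ht1
    have : t ≠ 0 := by linarith
    have h3 : t * Real.log t ^ 2 ≠ 0 := by positivity
    apply ContinuousAt.continuousWithinAt
    fun_prop (disch := assumption)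
  have hIi : IntervalIntegrable (fun t => deriv (fun t => 1 / Real.log t) t * ∑ k ∈ Finset.Icc 0 ⌊t⌋₊, mc k) volume a b := by
    rw [intervalIntegrable_iff_integrableOn_Icc_of_le hab]
    exact integrableOn_mul_sum_Icc _ (by linarith) hint
  rw [← intervalIntegral.integral_of_le hab]
  have hlo : ∫ t in a..b, -((Real.log t + C) / (t * Real.log t ^ 2)) ≤
      ∫ t in a..b, deriv (fun t => 1 / Real.log t) t * ∑ k ∈ Finset.Icc 0 ⌊t⌋₊, mc k := by
    apply intervalIntegral.integral_mono_on hab (hGi C) hIi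
    intro t ht
    have ht1 : 1 < t := lt_of_lt_of_le ha ht.1
    have hl := Real.log_pos ht1
    rw [← hderiv ht]
    have := (abs_le.1 (h t ht1.le)).2
    rw [neg_mul, neg_le_neg_iff, one_div_mul_eq_div]
    gcongr
    linarith
  have hhi : ∫ t in a..b, deriv (fun t => 1 / Real.log t) t * ∑ k ∈ Finset.Icc 0 ⌊t⌋₊, mc k ≤
      ∫ t in a..b, -((Real.log t + (-C)) / (t * Real.log t ^ 2)) := by
    apply intervalIntegral.integral_mono_on hab hIi (hGi (-C))
    intro t ht
    have ht1 : 1 < t := lt_of_lt_of_le ha ht.1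
    have hl := Real.log_pos ht1
    rw [← hderiv ht]
    have := (abs_le.1 (h t ht1.le)).1
    rw [neg_mul, neg_le_neg_iff, one_div_mul_eq_div]
    gcongr
    linarith
  rw [hG] at hlo hhi
  have ea := abs_le.1 (h a ha.le)
  have eb := abs_le.1 (h b (by linarith))
  set Sa := ∑ k ∈ Finset.Icc 0 ⌊a⌋₊, mc k
  set Sb := ∑ k ∈ Finset.Icc 0 ⌊b⌋₊, mc k
  have b1 : 1 / Real.log b * Sb ≤ 1 + C / Real.log b := by
    have : 1 / Real.log b * Sb ≤ 1 / Real.log b * (Real.log b + C) := by gcongr; linarith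
    refine this.trans (le_of_eq ?_); field_simp
  have b2 : 1 - C / Real.log b ≤ 1 / Real.log b * Sb := by
    have : 1 / Real.log b * (Real.log b - C) ≤ 1 / Real.log b * Sb := by gcongr; linarith
    refine le_trans (le_of_eq ?_) this; field_simp
  have a1 : 1 / Real.log a * Sa ≤ 1 + C / Real.log a := by
    have : 1 / Real.log a * Sa ≤ 1 / Real.log a * (Real.log a + C) := by gcongr; linarith
    refine this.trans (le_of_eq ?_); field_simp
  have a2 : 1 - C / Real.log a ≤ 1 / Real.log a * Sa := by
    have : 1 / Real.log a * (Real.log a - C) ≤ 1 / Real.log a * Sa := by gcongr; linarith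
    refine le_trans (le_of_eq ?_) this; field_simp
  rw [neg_div, neg_div] at hhi
  rw [mul_div_assoc, abs_le]
  constructor <;> linarith

lemma sorted_get_le_iff (L : List ℕ) (hL : L.Pairwise (· ≤ ·)) (k : ℕ) (hk : k < L.length) (y : ℕ) :
    L.getD k 0 ≤ y ↔ k < L.countP (fun a => decide (a ≤ y)) := by
  rw [List.getD_eq_getElem _ _ hk]
  have hs : L.countP (fun a => decide (a ≤ y)) =
      (L.take k).countP (fun a => decide (a ≤ y)) + (L.drop k).countP (fun a => decide (a ≤ y)) := by
    rw [← List.countP_append, List.take_append_drop]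
  have hs' : L.countP (fun a => decide (a ≤ y)) =
      (L.take (k+1)).countP (fun a => decide (a ≤ y)) + (L.drop (k+1)).countP (fun a => decide (a ≤ y)) := by
    rw [← List.countP_append, List.take_append_drop]
  have hmono : ∀ i j (hi : i < L.length) (hj : j < L.length), i ≤ j → L[i] ≤ L[j] := by
    intro i j hi hj hij
    rcases hij.eq_or_lt with rfl | h
    · exact le_rfl
    · exact List.pairwise_iff_getElem.1 hL i j hi hj h
  constructor
  · intro h
    have : (L.take (k+1)).countP (fun a => decide (a ≤ y)) = (L.take (k+1)).length := by
      rw [List.countP_eq_length]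
      intro a ha
      obtain ⟨i, hi, rfl⟩ := List.getElem_of_mem ha
      rw [List.getElem_take]
      simp only [List.length_take] at hi
      simpa using (hmono i k (by omega) hk (by omega)).trans h
    rw [hs', this, List.length_take]
    omega
  · intro h
    by_contra hc
    push Not at hc
    have : (L.drop k).countP (fun a => decide (a ≤ y)) = 0 := by
      rw [List.countP_eq_zero]
      intro a ha
      obtain ⟨i, hi, rfl⟩ := List.getElem_of_mem ha
      rw [List.getElem_drop]
      simp only [List.length_drop] at hi
      have := hmono k (k+i) hk (by omega) (by omega)
      simp; omega
    have h2 : (L.take k).countP (fun a => decide (a ≤ y)) ≤ (L.take k).length := List.countP_le_length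
    rw [List.length_take] at h2
    omega

lemma median_le_iff {x : ℝ} (hx : 1 ≤ x) (y : ℕ) : medianLPF x ≤ y ↔
    (⌊x⌋₊ + 1) / 2 ≤ ((Finset.Icc 1 ⌊x⌋₊).filter (fun n => largestPrimeFactor n ≤ y)).card := by
  have hf : 1 ≤ ⌊x⌋₊ := Nat.le_floor (by simpa using hx)
  have hlen : (((Finset.Icc 1 ⌊x⌋₊).val.map largestPrimeFactor).sort (· ≤ ·)).length = ⌊x⌋₊ := by
    simp
  rw [medianLPF, sorted_get_le_iff _ (Multiset.pairwise_sort _ _) _ (by rw [hlen]; omega)]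
  have : (((Finset.Icc 1 ⌊x⌋₊).val.map largestPrimeFactor).sort (· ≤ ·)).countP (fun a => decide (a ≤ y))
      = ((Finset.Icc 1 ⌊x⌋₊).filter (fun n => largestPrimeFactor n ≤ y)).card := by
    have h := Multiset.coe_countP (fun a => a ≤ y) (((Finset.Icc 1 ⌊x⌋₊).val.map largestPrimeFactor).sort (· ≤ ·))
    rw [Multiset.sort_eq, Multiset.countP_map] at h
    rw [← h]
    rfl
  rw [this]
  omega

lemma lt_lpf_iff {n y : ℕ} (hn : 1 ≤ n) (hy : 1 ≤ y) :
    y < largestPrimeFactor n ↔ ∃ p, p.Prime ∧ p ∣ n ∧ y < p := by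
  rw [largestPrimeFactor]
  split_ifs with h
  · have : n = 1 := by omega
    subst this
    constructor
    · intro h; omega
    · rintro ⟨p, hp, hd, _⟩
      exact absurd (Nat.dvd_one.1 hd) hp.one_lt.ne'
  · rw [Finset.lt_sup_iff]
    simp only [Nat.mem_primeFactors, id]
    constructor
    · rintro ⟨p, ⟨h1, h2, _⟩, h3⟩; exact ⟨p, h1, h2, h3⟩
    · rintro ⟨p, h1, h2, h3⟩; exact ⟨p, ⟨h1, h2, by omega⟩, h3⟩

lemma count_eq {N y : ℕ} (hy : 1 ≤ y) (hyN : N < (y + 1) * (y + 1)) :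
    ((Finset.Icc 1 N).filter (fun n => y < largestPrimeFactor n)).card =
      ∑ p ∈ Finset.Ioc y N with p.Prime, N / p := by
  have : (Finset.Icc 1 N).filter (fun n => y < largestPrimeFactor n) =
      ((Finset.Ioc y N).filter Nat.Prime).biUnion (fun p => (Finset.Ioc 0 N).filter (p ∣ ·)) := by
    ext n
    simp only [Finset.mem_filter, Finset.mem_Icc, Finset.mem_biUnion, Finset.mem_Ioc]
    constructor
    · rintro ⟨⟨h1, h2⟩, h3⟩
      obtain ⟨p, hp, hd, hyp⟩ := (lt_lpf_iff h1 hy).1 h3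
      exact ⟨p, ⟨⟨hyp, (Nat.le_of_dvd h1 hd).trans h2⟩, hp⟩, ⟨h1, h2⟩, hd⟩
    · rintro ⟨p, ⟨⟨hyp, _⟩, hp⟩, ⟨h1, h2⟩, hd⟩
      exact ⟨⟨h1, h2⟩, (lt_lpf_iff h1 hy).2 ⟨p, hp, hd, hyp⟩⟩
  rw [this, Finset.card_biUnion]
  · exact Finset.sum_congr rfl fun p _ => Nat.Ioc_filter_dvd_card_eq_div N p
  · intro p hp q hq hpq
    simp only [Finset.mem_coe, Finset.mem_filter, Finset.mem_Ioc] at hp hq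
    rw [Function.onFun, Finset.disjoint_left]
    intro n hn hn'
    simp only [Finset.mem_filter, Finset.mem_Ioc] at hn hn'
    have hd : p * q ∣ n := Nat.Coprime.mul_dvd_of_dvd_of_dvd ((Nat.coprime_primes hp.2 hq.2).2 hpq) hn.2 hn'.2
    have h1 := Nat.le_of_dvd hn.1.1 hd
    have h2 : (y+1) * (y+1) ≤ p * q := Nat.mul_le_mul hp.1.1 hq.1.1
    omega

lemma count_bounds {N y : ℕ} (hy : 2 ≤ y) (hyN : N < (y + 1) * (y + 1)) :
    ((Finset.Icc 1 N).filter (fun n => y < largestPrimeFactor n)).card ≤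
      N * ∑ p ∈ Finset.Ioc y N with p.Prime, (1:ℝ) / p ∧
    N * ∑ p ∈ Finset.Ioc y N with p.Prime, (1:ℝ) / p - Real.log 4 * N / Real.log y ≤
      ((Finset.Icc 1 N).filter (fun n => y < largestPrimeFactor n)).card := by
  rw [count_eq (by omega) hyN]
  have hly : 0 < Real.log y := Real.log_pos (by exact_mod_cast (by omega : 1 < y))
  push_cast
  constructor
  · rw [Finset.mul_sum]
    refine Finset.sum_le_sum fun p _ => ?_
    rw [mul_one_div]
    exact Nat.cast_div_le
  · have hc : (((Finset.Ioc y N).filter Nat.Prime).card : ℝ) ≤ Real.log 4 * N / Real.log y := by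
      rw [le_div_iff₀ hly, ← nsmul_eq_mul, ← Finset.sum_const]
      have := Chebyshev.theta_le_log4_mul_x (x := N) (Nat.cast_nonneg N)
      refine le_trans ?_ this
      rw [Chebyshev.theta, Nat.floor_natCast]
      calc _ ≤ ∑ p ∈ Finset.Ioc y N with p.Prime, Real.log p := by
            refine Finset.sum_le_sum fun p hp => ?_
            simp only [Finset.mem_filter, Finset.mem_Ioc] at hp
            exact Real.log_le_log (by exact_mod_cast (by omega : 0 < y)) (by exact_mod_cast hp.1.1.le)
        _ ≤ _ := by
            apply Finset.sum_le_sum_of_subset_of_nonneg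
            · exact Finset.filter_subset_filter _ (Finset.Ioc_subset_Ioc_left (Nat.zero_le _))
            · intro p _ _; exact Real.log_natCast_nonneg p
    have : N * ∑ p ∈ Finset.Ioc y N with p.Prime, (1:ℝ) / p - ((Finset.Ioc y N).filter Nat.Prime).card
        ≤ ∑ p ∈ Finset.Ioc y N with p.Prime, ((N / p : ℕ) : ℝ) := by
      rw [Finset.mul_sum, Finset.card_eq_sum_ones]
      push_cast
      rw [← Finset.sum_sub_distrib]
      refine Finset.sum_le_sum fun p _ => ?_
      have h2 := Nat.lt_floor_add_one ((N : ℝ) / p)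
      rw [Nat.floor_div_eq_div] at h2
      rw [mul_one_div]
      linarith
    linarith

lemma key_tendsto {α : ℝ} (h1 : 1 / 2 < α) (h2 : α < 1) :
    Tendsto (fun x : ℝ => (((Finset.Icc 1 ⌊x⌋₊).filter
      (fun n => ⌊x ^ α⌋₊ < largestPrimeFactor n)).card : ℝ) / ⌊x⌋₊) atTop (nhds (-Real.log α)) := by
  obtain ⟨C, hC, h⟩ := mertens_two
  have hα : 0 < α := by linarith
  have hlog : Tendsto (fun x : ℝ => Real.log (x ^ α)) atTop atTop :=
    Real.tendsto_log_atTop.comp (tendsto_rpow_atTop hα)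
  have hlog2 : Tendsto (fun x : ℝ => Real.log (⌊x ^ α⌋₊ : ℝ)) atTop atTop :=
    Real.tendsto_log_atTop.comp (tendsto_natCast_atTop_atTop.comp
      (tendsto_nat_floor_atTop.comp (tendsto_rpow_atTop hα)))
  have t1 : Tendsto (fun x : ℝ => -Real.log α + C / Real.log (x ^ α)) atTop (nhds (-Real.log α)) := by
    simpa using (hlog.const_div_atTop C).const_add (-Real.log α)
  have t2 : Tendsto (fun x : ℝ => -Real.log α - C / Real.log (x ^ α) - Real.log 4 / Real.log (⌊x ^ α⌋₊ : ℝ))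
      atTop (nhds (-Real.log α)) := by
    simpa using ((hlog.const_div_atTop C).const_sub (-Real.log α)).sub (hlog2.const_div_atTop (Real.log 4))
  have ev : ∀ᶠ x : ℝ in atTop, 2 ≤ x ^ α ∧ 2 ≤ x :=
    ((tendsto_rpow_atTop hα).eventually_ge_atTop 2).and (eventually_ge_atTop 2)
  have main : ∀ᶠ x : ℝ in atTop,
      (((Finset.Icc 1 ⌊x⌋₊).filter (fun n => ⌊x ^ α⌋₊ < largestPrimeFactor n)).card : ℝ) / ⌊x⌋₊ ≤
        -Real.log α + C / Real.log (x ^ α) ∧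
      -Real.log α - C / Real.log (x ^ α) - Real.log 4 / Real.log (⌊x ^ α⌋₊ : ℝ) ≤
      (((Finset.Icc 1 ⌊x⌋₊).filter (fun n => ⌊x ^ α⌋₊ < largestPrimeFactor n)).card : ℝ) / ⌊x⌋₊ := by
    filter_upwards [ev] with x ⟨hx1, hx2⟩
    have hy : 2 ≤ ⌊x ^ α⌋₊ := Nat.le_floor (by simpa using hx1)
    have hN : 2 ≤ ⌊x⌋₊ := Nat.le_floor (by simpa using hx2)
    have hN0 : (0:ℝ) < ⌊x⌋₊ := by exact_mod_cast (by omega : 0 < ⌊x⌋₊)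
    have hlt : ⌊x⌋₊ < (⌊x ^ α⌋₊ + 1) * (⌊x ^ α⌋₊ + 1) := by
      have a1 := Nat.lt_floor_add_one (x ^ α)
      have a2 : x ≤ x ^ α * x ^ α := by
        rw [← Real.rpow_add (by linarith)]
        calc x = x ^ (1:ℝ) := (Real.rpow_one x).symm
          _ ≤ _ := Real.rpow_le_rpow_of_exponent_le (by linarith) (by linarith)
      have a3 := Nat.floor_le (by linarith : 0 ≤ x)
      have : (⌊x⌋₊ : ℝ) < ((⌊x ^ α⌋₊ : ℝ) + 1) * ((⌊x ^ α⌋₊ : ℝ) + 1) := by nlinarith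
      exact_mod_cast this
    obtain ⟨b1, b2⟩ := count_bounds hy hlt
    have hle : x ^ α ≤ x := by
      calc x ^ α ≤ x ^ (1:ℝ) := Real.rpow_le_rpow_of_exponent_le (by linarith) (by linarith)
        _ = x := Real.rpow_one x
    have hm := abs_le.1 (h (x ^ α) x (by linarith) hle)
    have hll : Real.log (Real.log x) - Real.log (Real.log (x ^ α)) = -Real.log α := by
      rw [Real.log_rpow (by linarith), Real.log_mul hα.ne' (Real.log_pos (by linarith)).ne']
      ring
    rw [hll] at hm
    set S := ∑ p ∈ Finset.Ioc ⌊x ^ α⌋₊ ⌊x⌋₊ with p.Prime, (1:ℝ) / p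
    constructor
    · rw [div_le_iff₀ hN0]
      refine b1.trans ?_
      rw [mul_comm]
      gcongr
      linarith
    · rw [le_div_iff₀ hN0]
      refine le_trans ?_ b2
      have : (⌊x⌋₊ : ℝ) * S - Real.log 4 * ⌊x⌋₊ / Real.log (⌊x ^ α⌋₊ : ℝ)
        = (S - Real.log 4 / Real.log (⌊x ^ α⌋₊ : ℝ)) * ⌊x⌋₊ := by ring
      rw [this]
      gcongr
      linarith
  exact tendsto_of_tendsto_of_tendsto_of_le_of_le' t2 t1 (main.mono fun _ h => h.2) (main.mono fun _ h => h.1)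

lemma median_lower {α : ℝ} (h1 : 1 / 2 < α) (h2 : α < Real.exp (-1/2)) :
    ∀ᶠ x : ℝ in atTop, α ≤ Real.log (medianLPF x) / Real.log x := by
  have hα : 0 < α := by linarith
  have hα1 : α < 1 := h2.trans_le (by rw [Real.exp_le_one_iff]; norm_num)
  have hl : 1/2 < -Real.log α := by
    have := (Real.log_lt_iff_lt_exp hα).2 h2
    linarith
  filter_upwards [(key_tendsto h1 hα1).eventually_const_lt hl, eventually_ge_atTop 2] with x hk hx
  have hN : 2 ≤ ⌊x⌋₊ := Nat.le_floor (by simpa using hx)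
  have hN0 : (0:ℝ) < ⌊x⌋₊ := by exact_mod_cast (by omega : 0 < ⌊x⌋₊)
  rw [lt_div_iff₀ hN0] at hk
  have hsplit := Finset.card_filter_add_card_filter_not (s := Finset.Icc 1 ⌊x⌋₊)
    (fun n => largestPrimeFactor n ≤ ⌊x ^ α⌋₊)
  simp only [not_le, Nat.card_Icc, Nat.add_sub_cancel] at hsplit
  have hM : ⌊x ^ α⌋₊ < medianLPF x := by
    rw [← not_le, median_le_iff (by linarith)]
    have : ⌊x⌋₊ < 2 * ((Finset.Icc 1 ⌊x⌋₊).filter (fun n => ⌊x ^ α⌋₊ < largestPrimeFactor n)).card := by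
      have : (⌊x⌋₊ : ℝ) < 2 * (((Finset.Icc 1 ⌊x⌋₊).filter (fun n => ⌊x ^ α⌋₊ < largestPrimeFactor n)).card : ℝ) := by linarith
      exact_mod_cast this
    omega
  have hM' := (Nat.floor_lt (by positivity)).1 hM
  have hlx : 0 < Real.log x := Real.log_pos (by linarith)
  rw [le_div_iff₀ hlx, ← Real.log_rpow (by linarith)]
  exact Real.log_le_log (by positivity) hM'.le

lemma median_upper {α : ℝ} (h1 : Real.exp (-1/2) < α) (h2 : α < 1) :
    ∀ᶠ x : ℝ in atTop, Real.log (medianLPF x) / Real.log x ≤ α := by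
  have he : 1/2 < Real.exp (-1/2) := by
    have := Real.add_one_lt_exp (x := -1/2) (by norm_num)
    linarith
  have hα : 0 < α := by linarith
  have hl : -Real.log α < 1/2 := by
    have := (Real.lt_log_iff_exp_lt hα).2 h1
    linarith
  filter_upwards [(key_tendsto (he.trans h1) h2).eventually_lt_const hl, eventually_ge_atTop 2] with x hk hx
  have hN : 2 ≤ ⌊x⌋₊ := Nat.le_floor (by simpa using hx)
  have hN0 : (0:ℝ) < ⌊x⌋₊ := by exact_mod_cast (by omega : 0 < ⌊x⌋₊)
  rw [div_lt_iff₀ hN0] at hk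
  have hsplit := Finset.card_filter_add_card_filter_not (s := Finset.Icc 1 ⌊x⌋₊)
    (fun n => largestPrimeFactor n ≤ ⌊x ^ α⌋₊)
  simp only [not_le, Nat.card_Icc, Nat.add_sub_cancel] at hsplit
  have hM : medianLPF x ≤ ⌊x ^ α⌋₊ := by
    rw [median_le_iff (by linarith)]
    have : 2 * ((Finset.Icc 1 ⌊x⌋₊).filter (fun n => ⌊x ^ α⌋₊ < largestPrimeFactor n)).card < ⌊x⌋₊ := by
      have : 2 * (((Finset.Icc 1 ⌊x⌋₊).filter (fun n => ⌊x ^ α⌋₊ < largestPrimeFactor n)).card : ℝ) < (⌊x⌋₊ : ℝ) := by linarith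
      exact_mod_cast this
    omega
  have hM' := (Nat.le_floor_iff (by positivity)).1 hM
  have hlx : 0 < Real.log x := Real.log_pos (by linarith)
  rw [div_le_iff₀ hlx]
  rcases Nat.eq_zero_or_pos (medianLPF x) with h0 | h0
  · rw [h0]; simp; positivity
  · rw [← Real.log_rpow (by linarith)]
    exact Real.log_le_log (by exact_mod_cast h0) hM'

theorem median_largest_prime_factor_exponent :
    Filter.Tendsto (fun x : ℝ => Real.log (medianLPF x) / Real.log x) atTop
      (nhds (1 / Real.sqrt (Real.exp 1))) := by
  have hs : 1 / Real.sqrt (Real.exp 1) = Real.exp (-1/2) := by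
    rw [← Real.exp_half, one_div, ← Real.exp_neg]; norm_num
  rw [hs]
  have he : 1/2 < Real.exp (-1/2) := by
    have := Real.add_one_lt_exp (x := -1/2) (by norm_num)
    linarith
  have he1 : Real.exp (-1/2) < 1 := by rw [Real.exp_lt_one_iff]; norm_num
  rw [tendsto_order]
  constructor
  · intro a ha
    obtain ⟨b, hb1, hb2⟩ := exists_between (max_lt ha he)
    filter_upwards [median_lower ((le_max_right _ _).trans_lt hb1) hb2] with x hx
    exact ((le_max_left _ _).trans_lt hb1).trans_le hx
  · intro a ha
    obtain ⟨b, hb1, hb2⟩ := exists_between (lt_min ha he1)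
    filter_upwards [median_upper hb1 (hb2.trans_le (min_le_right _ _))] with x hx
    exact hx.trans_lt (hb2.trans_le (min_le_left _ _))
end

section
/- Σ_{p ≤ x} {x/p} = (1-γ)·x/log x + O(x/(log x)²) as x → ∞, where the sum is over primes p ≤ x and γ is the Euler–Mascheroni constant. -/
open Filter Real
open scoped Classical


lemma aux_q_bound (n : ℕ) (hn : 1 ≤ n) (s : ℂ) (hs : 0 < s.re) :
    ‖(s-1) * (n:ℂ)^(-s) + ((n:ℂ)+1)^(1-s) - (n:ℂ)^(1-s)‖ ≤ ‖s-1‖ * ‖s‖ * (n:ℝ)^(-s.re-1) := by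
  have hn0 : (0:ℝ) < n := by exact_mod_cast hn
  have hd : ∀ (a : ℂ) (u : ℝ), 0 < u →
      HasDerivAt (fun u : ℝ => (u:ℂ)^a) (a * (u:ℂ)^(a-1)) u := by
    intro a u hu
    have h := ((hasDerivAt_id (u:ℂ)).cpow_const (c := a) (Or.inl (by simpa using hu))).comp_ofReal
    simpa using h
  have h1 : ∀ u ∈ Set.Icc (n:ℝ) (n+1), ‖(u:ℂ)^(-s) - (n:ℂ)^(-s)‖ ≤ ‖s‖ * (n:ℝ)^(-s.re-1) * 1 := by
    intro u hu
    have := (convex_Icc (n:ℝ) (n+1)).norm_image_sub_le_of_norm_hasDerivWithin_le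
      (f := fun u : ℝ => (u:ℂ)^(-s)) (f' := fun u : ℝ => -s * (u:ℂ)^(-s-1)) (C := ‖s‖ * (n:ℝ)^(-s.re-1)) (x := (n:ℝ)) (y := u)
      (fun x hx => (hd (-s) x (lt_of_lt_of_le hn0 hx.1)).hasDerivWithinAt) ?_ ⟨le_rfl, by linarith⟩ hu
    · refine (by simpa using this : _ ≤ _).trans ?_
      gcongr
      rw [abs_le]; constructor <;> linarith [hu.1, hu.2]
    · intro x hx
      have hx0 : 0 < x := lt_of_lt_of_le hn0 hx.1
      rw [norm_mul, norm_neg, Complex.norm_cpow_eq_rpow_re_of_pos hx0]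
      gcongr 
      have : (-s-1).re = -s.re-1 := by simp
      rw [this]
      exact Real.rpow_le_rpow_of_nonpos hn0 hx.1 (by linarith)
  have h2 := (convex_Icc (n:ℝ) (n+1)).norm_image_sub_le_of_norm_hasDerivWithin_le
      (f := fun u : ℝ => (u:ℂ)^(1-s) + (s-1) * (n:ℂ)^(-s) * u)
      (f' := fun u : ℝ => (1-s) * (u:ℂ)^(1-s-1) + (s-1) * (n:ℂ)^(-s))
      (C := ‖s-1‖ * (‖s‖ * (n:ℝ)^(-s.re-1))) (x := (n:ℝ)) (y := (n:ℝ)+1)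
      (fun x hx => by
        refine HasDerivAt.hasDerivWithinAt ?_
        refine (hd (1-s) x (lt_of_lt_of_le hn0 hx.1)).add ?_
        have := (HasDerivAt.ofReal_comp (hasDerivAt_id x)).const_mul ((s-1) * (n:ℂ)^(-s))
        simpa using this) ?_ ⟨le_rfl, by linarith⟩ ⟨by linarith, le_rfl⟩
  · have e : (s-1) * (n:ℂ)^(-s) + ((n:ℂ)+1)^(1-s) - (n:ℂ)^(1-s) = 
      (((n:ℝ)+1 : ℝ):ℂ)^(1-s) + (s-1) * (n:ℂ)^(-s) * (((n:ℝ)+1 : ℝ):ℂ) - (((n:ℝ):ℂ)^(1-s) + (s-1) * (n:ℂ)^(-s) * ((n:ℝ):ℂ)) := by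
      push_cast; ring
    rw [e]
    refine h2.trans ?_
    simp [mul_assoc]
  · intro x hx
    have : (1-s) * (x:ℂ)^(1-s-1) + (s-1) * (n:ℂ)^(-s) = -(s-1) * ((x:ℂ)^(-s) - (n:ℂ)^(-s)) := by
      rw [show 1 - s - 1 = -s by ring]; ring
    rw [this, norm_mul, norm_neg]
    gcongr
    simpa using h1 x hx

noncomputable def auxq (n : ℕ) (s : ℂ) : ℂ := (s-1) * (n:ℂ)^(-s) + ((n:ℂ)+1)^(1-s) - (n:ℂ)^(1-s)

lemma auxq_diff (n : ℕ) (hn : 1 ≤ n) : Differentiable ℂ (auxq n) := by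
  have h0 : (n:ℂ) ≠ 0 := by exact_mod_cast (by lia : n ≠ 0)
  have h1 : (n:ℂ) + 1 ≠ 0 := by exact_mod_cast (by lia : n + 1 ≠ 0)
  have hh : ∀ c : ℂ, c ≠ 0 → ∀ f : ℂ → ℂ, Differentiable ℂ f → Differentiable ℂ (fun s => c ^ (f s)) := by
    intro c hc f hf
    exact fun x => (hf x).const_cpow (Or.inl hc)
  unfold auxq
  have a1 := hh _ h0 (fun s => -s) (by fun_prop)
  have a2 := hh _ h0 (fun s => 1-s) (by fun_prop)
  have a3 := hh _ h1 (fun s => 1-s) (by fun_prop)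
  fun_prop

lemma auxq_summable (N : ℕ) (hN : 1 ≤ N) {s : ℂ} (hs : 0 < s.re) : Summable (fun n => auxq (N+n) s) := by
  refine Summable.of_norm_bounded (g := fun n:ℕ => ‖s-1‖ * ‖s‖ * ((N+n:ℕ):ℝ)^(-s.re-1)) ?_
    (fun n => aux_q_bound (N+n) (by lia) s hs)
  refine Summable.mul_left _ ?_
  have := Real.summable_nat_rpow (p := -s.re-1) |>.2 (by linarith)
  have := (summable_nat_add_iff N).2 this
  simpa [add_comm] using this

lemma aux_fin (N : ℕ) (s : ℂ) (M : ℕ) : ∑ n ∈ Finset.range M, auxq (N+n) s = 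
    (s-1) * ∑ n ∈ Finset.range M, ((N+n:ℕ):ℂ)^(-s) + ((N+M:ℕ):ℂ)^(1-s) - (N:ℂ)^(1-s) := by
  induction M with
  | zero => simp
  | succ M ih =>
    rw [Finset.sum_range_succ, ih, Finset.sum_range_succ, auxq]
    push_cast
    rw [← add_assoc]; ring

lemma zeta1_eq_of_one_lt (N : ℕ) (hN : 1 ≤ N) {s : ℂ} (hs : 1 < s.re) :
    riemannZeta₁ s = (s-1) * ∑ n ∈ Finset.range N, ((n:ℕ):ℂ)^(-s) + (N:ℂ)^(1-s) + ∑' n, auxq (N+n) s := by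
  have hs0 : 0 < s.re := by linarith
  have hs1 : s ≠ 1 := by rintro rfl; simp at hs
  have hsn : s ≠ 0 := by rintro rfl; simp at hs0
  have ht := (auxq_summable N hN hs0).hasSum.tendsto_sum_nat
  have hz : HasSum (fun n : ℕ => (n:ℂ)^(-s)) (riemannZeta s) := by
    have h := LSeriesHasSum_one hs
    unfold LSeriesHasSum at h
    convert! h using 1
    ext n
    rcases eq_or_ne n 0 with rfl | h
    · simp [hsn]
    · simp [LSeries.term_of_ne_zero h, Complex.cpow_neg]
  have hz2 : HasSum (fun n : ℕ => ((N+n:ℕ):ℂ)^(-s)) (riemannZeta s - ∑ n ∈ Finset.range N, ((n:ℕ):ℂ)^(-s)) := by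
    have := (hasSum_nat_add_iff' N).2 hz
    simpa [add_comm] using this
  have h0 : Tendsto (fun M : ℕ => ((N+M:ℕ):ℂ)^(1-s)) atTop (nhds 0) := by
    rw [tendsto_zero_iff_norm_tendsto_zero]
    have : Tendsto (fun M : ℕ => ((N+M:ℕ):ℝ)^(-(s.re-1))) atTop (nhds 0) :=
      (tendsto_rpow_neg_atTop (by linarith)).comp (tendsto_natCast_atTop_atTop.comp (tendsto_add_atTop_nat N |>.congr (by intro; ring)))
    refine this.congr fun M => ?_
    rw [← Complex.ofReal_natCast, Complex.norm_cpow_eq_rpow_re_of_pos (by exact_mod_cast (by lia))]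
    congr 1; simp
  have ht2 := ((hz2.tendsto_sum_nat.const_mul (s-1)).add h0).sub_const ((N:ℂ)^(1-s))
  have := tendsto_nhds_unique ht (ht2.congr fun M => (aux_fin N s M).symm)
  rw [this, riemannZeta_eq_inv_sub_mul hs1]
  have := sub_ne_zero_of_ne hs1
  field_simp
  ring

lemma zeta1_eq (N : ℕ) (hN : 1 ≤ N) {s : ℂ} (hs : 0 < s.re) :
    riemannZeta₁ s = (s-1) * ∑ n ∈ Finset.range N, ((n:ℕ):ℂ)^(-s) + (N:ℂ)^(1-s) + ∑' n, auxq (N+n) s := by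
  have ho : IsOpen {s : ℂ | 0 < s.re} := isOpen_lt continuous_const Complex.continuous_re
  have hd : DifferentiableOn ℂ (fun s => ∑' n, auxq (N+n) s) {s : ℂ | 0 < s.re} := by
    intro s hs
    simp only [Set.mem_ofPred_eq] at hs
    have hV : IsOpen {z : ℂ | s.re/2 < z.re ∧ ‖z‖ < ‖s‖+1} :=
      (isOpen_lt continuous_const Complex.continuous_re).inter (isOpen_lt continuous_norm continuous_const)
    have : DifferentiableOn ℂ (fun s => ∑' n, auxq (N+n) s) {z : ℂ | s.re/2 < z.re ∧ ‖z‖ < ‖s‖+1} := by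
      refine Complex.differentiableOn_tsum_of_summable_norm (u := fun n:ℕ => (‖s‖+2) * (‖s‖+1) * ((N+n:ℕ):ℝ)^(-(s.re/2)-1)) ?_ (fun i => (auxq_diff _ (by lia)).differentiableOn) hV ?_
      · refine Summable.mul_left _ ?_
        have := Real.summable_nat_rpow (p := -(s.re/2)-1) |>.2 (by linarith)
        have := (summable_nat_add_iff N).2 this
        simpa [add_comm] using this
      · rintro i w ⟨hw1, hw2⟩
        refine (aux_q_bound (N+i) (by lia) w (by linarith)).trans ?_
        have : ‖w-1‖ ≤ ‖s‖+2 := by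
          refine (norm_sub_le _ _).trans ?_
          rw [norm_one]; linarith
        gcongr
        exact_mod_cast (by lia : 1 ≤ N + i)
    exact ((this s ⟨by linarith, by linarith⟩).differentiableAt (hV.mem_nhds ⟨by linarith, by linarith⟩)).differentiableWithinAt
  have hN0 : (N:ℂ) ≠ 0 := by exact_mod_cast (by lia : N ≠ 0)
  have hd2 : DifferentiableOn ℂ (fun s => (s-1) * ∑ n ∈ Finset.range N, ((n:ℕ):ℂ)^(-s) + (N:ℂ)^(1-s) + ∑' n, auxq (N+n) s) {s : ℂ | 0 < s.re} := by
    refine DifferentiableOn.add (DifferentiableOn.add (DifferentiableOn.mul (by fun_prop) ?_) ?_) hd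
    · refine DifferentiableOn.fun_sum fun n _ => ?_
      intro s hs
      simp only [Set.mem_ofPred_eq] at hs
      refine DifferentiableAt.differentiableWithinAt ?_
      refine DifferentiableAt.const_cpow (by fun_prop) (Or.inr ?_)
      intro h
      have := congrArg Complex.re h
      simp at this; linarith
    · intro s _
      exact (DifferentiableAt.const_cpow (by fun_prop) (Or.inl hN0)).differentiableWithinAt
  have hconn : IsPreconnected {s : ℂ | 0 < s.re} := (convex_halfSpace_re_gt 0).isPreconnected
  have := (differentiable_riemannZeta₁.differentiableOn.analyticOnNhd ho).eqOn_of_preconnected_of_eventuallyEq (hd2.analyticOnNhd ho) hconn (z₀ := 2) (by simp) ?_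
  · exact this hs
  · have : {s : ℂ | 1 < s.re} ∈ nhds (2:ℂ) := (isOpen_lt continuous_const Complex.continuous_re).mem_nhds (by simp)
    filter_upwards [this] with s hs
    exact zeta1_eq_of_one_lt N hN hs


lemma zeta_upper : ∃ C > (0:ℝ), ∀ s : ℂ, 99/100 ≤ s.re → s.re ≤ 4 → 1 ≤ |s.im| →
    ‖riemannZeta s‖ ≤ C * |s.im| ^ (1/50 : ℝ) := by
  have hsum : Summable (fun n : ℕ => (n:ℝ)^(-(101/100) : ℝ)) := Real.summable_nat_rpow.2 (by norm_num)
  set K := ∑' n : ℕ, (n:ℝ)^(-(101/100) : ℝ) with hK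
  have hK0 : 0 ≤ K := tsum_nonneg fun n => by positivity
  refine ⟨(6 * K + 1) * 2, by positivity, fun s h1 h2 h3 => ?_⟩
  set t := |s.im| with ht
  have hs1 : s ≠ 1 := by rintro rfl; simp at ht; rw [ht] at h3; norm_num at h3
  have hs0 : 0 < s.re := by linarith
  set N := ⌈t⌉₊ with hNdef
  have hNt : t ≤ N := Nat.le_ceil t
  have hN2 : (N:ℝ) ≤ 2 * t := by
    have := Nat.ceil_lt_add_one (by linarith : 0 ≤ t); linarith
  have hN1 : 1 ≤ N := by
    have : (1:ℝ) ≤ N := h3.trans hNt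
    exact_mod_cast this
  have hNr : (1:ℝ) ≤ N := by exact_mod_cast hN1
  have htn : t ≤ ‖s - 1‖ := by
    have := Complex.abs_im_le_norm (s-1); simpa using this
  have hsn : ‖s‖ ≤ 5 * N := by
    have := Complex.norm_le_abs_re_add_abs_im s
    rw [abs_of_pos hs0] at this; linarith
  have hne := sub_ne_zero_of_ne hs1
  have hpos : 0 < ‖s-1‖ := norm_pos_iff.2 hne
  have key := zeta1_eq N hN1 hs0
  have A1 : ‖∑ n ∈ Finset.range N, ((n:ℕ):ℂ)^(-s)‖ ≤ K * (N:ℝ)^(1/50:ℝ) := by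
    calc _ ≤ ∑ n ∈ Finset.range N, (n:ℝ)^(-(101/100) : ℝ) * (N:ℝ)^(1/50:ℝ) := by
          refine norm_sum_le_of_le _ fun n hn => ?_
          rcases Nat.eq_zero_or_pos n with rfl | hn0
          · have : s ≠ 0 := by rintro rfl; simp at hs0
            simp [this]
          have hnr : (1:ℝ) ≤ n := by exact_mod_cast hn0
          rw [← Complex.ofReal_natCast, Complex.norm_cpow_eq_rpow_re_of_pos (by linarith)]
          calc (n:ℝ)^((-s).re) ≤ (n:ℝ)^(-(101/100) + 1/50 : ℝ) := by
                refine Real.rpow_le_rpow_of_exponent_le hnr ?_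
                simp; linarith
            _ = (n:ℝ)^(-(101/100) : ℝ) * (n:ℝ)^(1/50:ℝ) := Real.rpow_add (by linarith) _ _
            _ ≤ _ := by
                gcongr
                exact (Finset.mem_range.1 hn).le
      _ = (∑ n ∈ Finset.range N, (n:ℝ)^(-(101/100) : ℝ)) * (N:ℝ)^(1/50:ℝ) := by rw [Finset.sum_mul]
      _ ≤ _ := by
        gcongr
        exact hsum.sum_le_tsum _ (fun n _ => by positivity)
  have A2 : ‖(N:ℂ)^(1-s)‖ ≤ (N:ℝ)^(1/50:ℝ) := by
    rw [← Complex.ofReal_natCast, Complex.norm_cpow_eq_rpow_re_of_pos (by linarith)]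
    refine Real.rpow_le_rpow_of_exponent_le hNr ?_
    simp; linarith
  have A3 : ‖∑' n, auxq (N+n) s‖ ≤ ‖s-1‖ * (5 * K * (N:ℝ)^(1/50:ℝ)) := by
    have hs' : Summable (fun n : ℕ => ((N+n:ℕ):ℝ)^(-(101/100) : ℝ)) := by
      have := (summable_nat_add_iff N).2 hsum
      simpa [add_comm] using this
    have hle : ∑' n : ℕ, ((N+n:ℕ):ℝ)^(-(101/100) : ℝ) ≤ K := by
      rw [hK, ← hsum.sum_add_tsum_nat_add N]
      simp only [add_comm N]
      have : 0 ≤ ∑ n ∈ Finset.range N, (n:ℝ)^(-(101/100) : ℝ) := Finset.sum_nonneg fun n _ => by positivity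
      linarith
    refine (tsum_of_norm_bounded (g := fun n : ℕ => ‖s-1‖ * (5 * N) * (N:ℝ)^(-(49/50):ℝ) * ((N+n:ℕ):ℝ)^(-(101/100) : ℝ)) (hs'.hasSum.mul_left _) fun n => ?_).trans ?_
    · refine (aux_q_bound (N+n) (by lia) s hs0).trans ?_
      rw [mul_assoc (‖s-1‖ * (5 * N))]
      gcongr
      have hb : (1:ℝ) ≤ ((N+n:ℕ):ℝ) := by exact_mod_cast (by lia : 1 ≤ N + n)
      calc ((N+n:ℕ):ℝ)^(-s.re-1) ≤ ((N+n:ℕ):ℝ)^(-(49/50) + -(101/100) : ℝ) := by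
            refine Real.rpow_le_rpow_of_exponent_le hb ?_
            linarith
        _ = ((N+n:ℕ):ℝ)^(-(49/50) : ℝ) * ((N+n:ℕ):ℝ)^(-(101/100) : ℝ) := Real.rpow_add (by linarith) _ _
        _ ≤ _ := by
          refine mul_le_mul_of_nonneg_right ?_ (by positivity)
          exact Real.rpow_le_rpow_of_nonpos (by linarith) (by push_cast; linarith [(Nat.cast_nonneg n : (0:ℝ) ≤ n)]) (by norm_num)
    · have : (N:ℝ) * (N:ℝ)^(-(49/50):ℝ) = (N:ℝ)^(1/50:ℝ) := by
        nth_rewrite 1 [← Real.rpow_one (N:ℝ)]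
        rw [← Real.rpow_add (by linarith)]; norm_num
      calc _ = ‖s-1‖ * (5 * (∑' n : ℕ, ((N+n:ℕ):ℝ)^(-(101/100) : ℝ)) * (N * (N:ℝ)^(-(49/50):ℝ))) := by ring
        _ ≤ _ := by
          rw [this]
          gcongr
  rw [riemannZeta_eq_inv_sub_mul hs1, key, norm_mul, norm_inv, inv_mul_le_iff₀ hpos]
  have hNt' : (N:ℝ)^(1/50:ℝ) ≤ 2 * t^(1/50:ℝ) := by
    calc (N:ℝ)^(1/50:ℝ) ≤ (2*t)^(1/50:ℝ) := by gcongr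
      _ = 2^(1/50:ℝ) * t^(1/50:ℝ) := Real.mul_rpow (by norm_num) (by linarith)
      _ ≤ _ := by
        gcongr
        calc (2:ℝ)^(1/50:ℝ) ≤ 2^(1:ℝ) := Real.rpow_le_rpow_of_exponent_le (by norm_num) (by norm_num)
          _ = 2 := by norm_num
  calc _ ≤ ‖(s-1) * ∑ n ∈ Finset.range N, ((n:ℕ):ℂ)^(-s)‖ + ‖(N:ℂ)^(1-s)‖ + ‖∑' n, auxq (N+n) s‖ := norm_add₃_le
    _ ≤ ‖s-1‖ * (K * (N:ℝ)^(1/50:ℝ)) + ‖s-1‖ * (N:ℝ)^(1/50:ℝ) + ‖s-1‖ * (5 * K * (N:ℝ)^(1/50:ℝ)) := by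
      rw [norm_mul]
      gcongr
      refine A2.trans ?_
      have : 0 ≤ (N:ℝ)^(1/50:ℝ) := by positivity
      nlinarith
    _ = ‖s-1‖ * ((6*K+1) * (N:ℝ)^(1/50:ℝ)) := by ring
    _ ≤ _ := by
      rw [mul_assoc (6*K+1)]
      gcongr

/-- derivative bound -/
lemma zeta_deriv_upper : ∃ C > (0:ℝ), ∀ s : ℂ, 199/200 ≤ s.re → s.re ≤ 3 → 2 ≤ |s.im| →
    ‖deriv riemannZeta s‖ ≤ C * |s.im| ^ (1/50 : ℝ) := by
  obtain ⟨C, hC, h⟩ := zeta_upper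
  refine ⟨C * 2 * 200, by positivity, fun s h1 h2 h3 => ?_⟩
  have hball : ∀ z ∈ Metric.closedBall s (1/200), |z.re - s.re| ≤ 1/200 ∧ |z.im - s.im| ≤ 1/200 := by
    intro z hz
    rw [mem_closedBall_iff_norm] at hz
    exact ⟨by simpa using (Complex.abs_re_le_norm (z-s)).trans hz, by simpa using (Complex.abs_im_le_norm (z-s)).trans hz⟩
  have him : ∀ z ∈ Metric.closedBall s (1/200), |s.im| - 1/200 ≤ |z.im| ∧ |z.im| ≤ |s.im| + 1/200 := by
    intro z hz
    have h1 := (hball z hz).2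
    have h2 := abs_abs_sub_abs_le_abs_sub z.im s.im
    have := abs_le.1 (h2.trans h1)
    constructor <;> linarith [this.1, this.2]
  have := Complex.norm_deriv_le_of_forall_mem_sphere_norm_le (c := s) (R := 1/200) (C := C * (2 * |s.im|^(1/50:ℝ))) (f := riemannZeta) (by norm_num) ?_ ?_
  · refine this.trans (le_of_eq (by ring))
  · refine DifferentiableOn.diffContOnCl fun z hz => ?_
    rw [closure_ball _ (by norm_num)] at hz
    refine (differentiableAt_riemannZeta ?_).differentiableWithinAt
    rintro rfl
    have := (him 1 hz).1
    simp at this; linarith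
  · intro z hz
    have hz := Metric.sphere_subset_closedBall hz
    have := abs_le.1 (hball z hz).1
    have h5 := him z hz
    refine (h z (by linarith [this.1]) (by linarith [this.2]) (by linarith)).trans ?_
    gcongr
    calc |z.im|^(1/50:ℝ) ≤ (2*|s.im|)^(1/50:ℝ) := by gcongr; linarith
      _ = 2^(1/50:ℝ) * |s.im|^(1/50:ℝ) := Real.mul_rpow (by norm_num) (by linarith)
      _ ≤ _ := by
        gcongr
        calc (2:ℝ)^(1/50:ℝ) ≤ 2^(1:ℝ) := Real.rpow_le_rpow_of_exponent_le (by norm_num) (by norm_num)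
          _ = 2 := by norm_num

lemma zeta_341 {x : ℝ} (hx : 0 < x) (y : ℝ) :
    1 ≤ ‖riemannZeta (1+x)‖^3 * ‖riemannZeta (1 + x + Complex.I * y)‖^4 * ‖riemannZeta (1 + x + 2 * Complex.I * y)‖ := by
  have := DirichletCharacter.norm_LFunction_product_ge_one (N := 1) 1 hx y
  simpa [DirichletCharacter.LFunctionTrivChar, DirichletCharacter.LFunction_modOne_eq] using this

lemma zeta_real_upper : ∃ C > (0:ℝ), ∀ x : ℝ, 0 < x → x ≤ 3 → ‖riemannZeta (1+x)‖ ≤ C / x := by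
  have hc : IsCompact (Set.Icc (0:ℝ) 3) := isCompact_Icc
  obtain ⟨C, hC⟩ := hc.exists_bound_of_continuousOn (f := fun x : ℝ => riemannZeta₁ (1+x)) 
    (by have := differentiable_riemannZeta₁.continuous; fun_prop)
  refine ⟨|C|+1, by positivity, fun x hx hx3 => ?_⟩
  have hne : (1 + x : ℂ) ≠ 1 := by
    intro h
    have : (x:ℂ) = 0 := by linear_combination h
    exact hx.ne' (by exact_mod_cast this)
  rw [riemannZeta_eq_inv_sub_mul hne, norm_mul]
  have := hC x ⟨hx.le, hx3⟩
  have h2 : ‖((1 + x : ℂ) - 1)⁻¹‖ = x⁻¹ := by simp [abs_of_pos hx]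
  rw [h2, div_eq_inv_mul]
  gcongr
  linarith [le_abs_self C]


lemma zeta_lower_aux : ∃ A ≥ (1:ℝ), ∀ x y : ℝ, 0 < x → x ≤ 2 → 2 ≤ |y| →
    x^3 ≤ A * |y|^(1/50:ℝ) * ‖riemannZeta (1 + x + Complex.I * y)‖^4 := by
  obtain ⟨C, hC, h⟩ := zeta_upper
  obtain ⟨R, hR, hr⟩ := zeta_real_upper
  refine ⟨R^3 * (C * 2) + 1, by linarith [show 0 < R^3*(C*2) by positivity], fun x y hx hx2 hy => ?_⟩
  have h1 := zeta_341 hx y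
  have h2 := hr x hx (by linarith)
  have h3 : ‖riemannZeta (1 + x + 2 * Complex.I * y)‖ ≤ C * (2 * |y|^(1/50:ℝ)) := by
    have := h (1 + x + 2 * Complex.I * y) (by simp; linarith) (by simp; linarith) (by simp [abs_mul]; linarith)
    refine this.trans ?_
    gcongr
    calc _ = (2*|y|)^(1/50:ℝ) := by simp [abs_mul]
      _ = 2^(1/50:ℝ) * |y|^(1/50:ℝ) := Real.mul_rpow (by norm_num) (by linarith)
      _ ≤ _ := by
        gcongr
        calc (2:ℝ)^(1/50:ℝ) ≤ 2^(1:ℝ) := Real.rpow_le_rpow_of_exponent_le (by norm_num) (by norm_num)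
          _ = 2 := by norm_num
  set Z := ‖riemannZeta (1 + x + Complex.I * y)‖
  have h4 : 1 ≤ (R/x)^3 * Z^4 * (C * (2 * |y|^(1/50:ℝ))) := by
    refine h1.trans ?_
    gcongr
  have h5 : x^3 ≤ R^3 * Z^4 * (C * (2 * |y|^(1/50:ℝ))) := by
    have e : (R/x)^3 * Z^4 * (C * (2 * |y|^(1/50:ℝ))) = R^3 * Z^4 * (C * (2 * |y|^(1/50:ℝ))) / x^3 := by
      field_simp
    rw [e, le_div_iff₀ (by positivity)] at h4
    linarith
  refine h5.trans ?_
  have : 0 ≤ |y|^(1/50:ℝ) * Z^4 := by positivity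
  nlinarith

lemma zeta_lower : ∃ c₁ > (0:ℝ), ∃ c₂ > (0:ℝ), c₁ ≤ 1/200 ∧ ∀ s : ℂ, 2 ≤ |s.im| →
    1 - c₁ / (|s.im|^(1/50:ℝ))^5 ≤ s.re → s.re ≤ 3 → c₂ ≤ ‖riemannZeta s‖ * (|s.im|^(1/50:ℝ))^4 := by
  obtain ⟨A, hA, h⟩ := zeta_lower_aux
  obtain ⟨D, hD, hd⟩ := zeta_deriv_upper
  have hA0 : 0 < A := by linarith
  set b : ℝ := 1 / (200 + 4 * A * D) with hb
  have hb0 : 0 < b := by positivity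
  have hb1 : b ≤ 1/200 := by
    rw [hb]; apply one_div_le_one_div_of_le (by norm_num); linarith [show 0 < 4*A*D by positivity]
  have hbAD : 4 * A * D * b ≤ 1 := by
    rw [hb, mul_one_div, div_le_one (by positivity)]; linarith
  have hb4 : b^4 ≤ 1/200 := by
    calc b^4 ≤ b^1 := pow_le_pow_of_le_one hb0.le (by linarith) (by norm_num)
      _ ≤ _ := by simpa using hb1
  -- lower bound to the right
  have right : ∀ s : ℂ, 2 ≤ |s.im| → 1 + b^4 / (|s.im|^(1/50:ℝ))^5 ≤ s.re → s.re ≤ 3 →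
      b^3 / A ≤ ‖riemannZeta s‖ * (|s.im|^(1/50:ℝ))^4 := by
    intro s h2 h3 h4
    set τ := |s.im|^(1/50:ℝ) with hτ
    have hτ1 : 1 ≤ τ := Real.one_le_rpow (by linarith) (by norm_num)
    have hη : 0 < b^4/τ^5 := by positivity
    have := h (s.re - 1) s.im (by linarith) (by linarith) h2
    have e : (1 + ((s.re - 1 : ℝ):ℂ) + Complex.I * s.im) = s := by
      apply Complex.ext <;> simp
    rw [e, ← hτ] at this
    have h5 : (b^4/τ^5)^3 ≤ A * τ * ‖riemannZeta s‖^4 := by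
      refine le_trans ?_ this
      gcongr; linarith
    refine le_of_pow_le_pow_left₀ (n := 4) (by norm_num) (by positivity) ?_
    have h6 : b^12 ≤ A * (‖riemannZeta s‖^4 * τ^16) := by
      rw [div_pow, div_le_iff₀ (by positivity)] at h5
      calc b^12 = (b^4)^3 := by ring
        _ ≤ _ := h5
        _ = _ := by ring
    calc (b^3/A)^4 = b^12 / A^4 := by ring
      _ ≤ b^12 / A := by
        gcongr
        calc A = A^1 := by ring
          _ ≤ A^4 := pow_le_pow_right₀ hA (by norm_num)
      _ ≤ _ := by
        rw [div_le_iff₀ hA0]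
        linarith [h6]
  refine ⟨b^4, by positivity, b^3/(2*A), by positivity, hb4, fun s h2 h3 h4 => ?_⟩
  rcases le_total (1 + b^4 / (|s.im|^(1/50:ℝ))^5) s.re with hr | hl
  · refine le_trans ?_ (right s h2 hr h4)
    gcongr; linarith
  set τ := |s.im|^(1/50:ℝ) with hτ
  have hτ1 : 1 ≤ τ := Real.one_le_rpow (by linarith) (by norm_num)
  have hη : 0 < b^4/τ^5 := by positivity
  have hη1 : b^4/τ^5 ≤ 1/200 := by
    rw [div_le_iff₀ (by positivity)]
    have : 1 ≤ τ^5 := one_le_pow₀ hτ1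
    linarith
  set η := b^4/τ^5 with hηd
  set f : ℝ → ℂ := fun u => riemannZeta (u + s.im * Complex.I) with hf
  have hfd : ∀ u : ℝ, HasDerivAt f (deriv riemannZeta (u + s.im * Complex.I)) u := by
    intro u
    have hne : ((u:ℂ) + s.im * Complex.I) ≠ 1 := by
      intro hh
      have := congrArg Complex.im hh
      simp at this; rw [this] at h2; norm_num at h2
    have := ((differentiableAt_riemannZeta hne).hasDerivAt.comp_add_const (u:ℂ) (s.im * Complex.I)).comp_ofReal
    exact this
  have hmv := (convex_Icc (199/200:ℝ) 3).norm_image_sub_le_of_norm_hasDerivWithin_le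
      (f := f) (f' := fun u => deriv riemannZeta (u + s.im * Complex.I)) (C := D * τ) (x := s.re) (y := 1 + η)
      (fun u hu => (hfd u).hasDerivWithinAt) ?_ ⟨by linarith, h4⟩ ⟨by linarith, by linarith⟩
  · have e : f s.re = riemannZeta s := by simp [hf]
    have hR := right ((1 + η : ℝ) + s.im * Complex.I) (by simpa using h2) (by
      rw [show (((1 + η : ℝ):ℂ) + s.im * Complex.I).im = s.im by simp, show (((1 + η : ℝ):ℂ) + s.im * Complex.I).re = 1 + η by simp]) (by simp; linarith)
    have e2 : riemannZeta ((1 + η : ℝ) + s.im * Complex.I) = f (1 + η) := rfl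
    rw [e2] at hR
    have e3 : (((1 + η : ℝ):ℂ) + s.im * Complex.I).im = s.im := by simp
    rw [e3, ← hτ] at hR
    rw [e] at hmv
    have h7 : ‖f (1+η)‖ ≤ ‖riemannZeta s‖ + D * τ * (2 * η) := by
      have : ‖f (1+η)‖ ≤ ‖riemannZeta s‖ + ‖f (1+η) - riemannZeta s‖ := by
        have := norm_add_le (riemannZeta s) (f (1+η) - riemannZeta s)
        simpa using this
      refine this.trans ?_
      gcongr
      refine hmv.trans ?_
      gcongr
      rw [Real.norm_eq_abs, abs_le]; constructor <;> linarith
    have h8 : b^3/A ≤ ‖riemannZeta s‖ * τ^4 + 2 * D * b^4 := by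
      calc b^3/A ≤ _ := hR
        _ ≤ (‖riemannZeta s‖ + D * τ * (2 * η)) * τ^4 := by gcongr
        _ = _ := by rw [hηd]; field_simp
    have h9 : 2 * D * b^4 ≤ b^3/(2*A) := by
      rw [le_div_iff₀ (by positivity)]
      calc 2 * D * b^4 * (2*A) = b^3 * (4 * A * D * b) := by ring
        _ ≤ b^3 * 1 := by gcongr
        _ = _ := by ring
    have : b^3/A = b^3/(2*A) + b^3/(2*A) := by field_simp; norm_num
    linarith
  · intro u hu
    have := hd (u + s.im * Complex.I) (by simpa using hu.1) (by simpa using hu.2) (by simpa using h2)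
    simpa [hτ] using this


noncomputable def auxH (s : ℂ) : ℂ := -(deriv riemannZeta₁ s / riemannZeta₁ s) - riemannZeta₀ s

lemma auxH_one : auxH 1 = -2 * (Real.eulerMascheroniConstant : ℂ) := by
  simp [auxH]; ring

lemma auxH_eq {s : ℂ} (hs : s ≠ 1) (hz : riemannZeta s ≠ 0) :
    auxH s = -(deriv riemannZeta s / riemannZeta s) - riemannZeta s := by
  have h0 := sub_ne_zero_of_ne hs
  have h1 : riemannZeta₁ s = (s-1) * riemannZeta s := by
    rw [riemannZeta_eq_inv_sub_mul hs]; field_simp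
  have h2 := deriv_riemannZeta_eq_neg_inv_sub_sq_mul_add hs
  have h3 : riemannZeta₀ s = riemannZeta s - (s-1)⁻¹ := by
    rw [riemannZeta_eq_inv_sub_add hs]; ring
  have h4 : deriv riemannZeta₁ s = (s-1) * deriv riemannZeta s + riemannZeta s := by
    rw [h2, h1]; field_simp; ring
  unfold auxH
  rw [h4, h3, h1]
  field_simp
  ring

lemma zeta1_ne {s : ℂ} (hs : 1 ≤ s.re) : riemannZeta₁ s ≠ 0 := by
  rcases eq_or_ne s 1 with rfl | h
  · simp
  · have := riemannZeta_ne_zero_of_one_le_re hs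
    rw [riemannZeta_eq_inv_sub_mul h] at this
    exact right_ne_zero_of_mul this

lemma auxH_diffAt {s : ℂ} (hs : riemannZeta₁ s ≠ 0) : DifferentiableAt ℂ auxH s := by
  unfold auxH
  have : DifferentiableAt ℂ (deriv riemannZeta₁) s := differentiable_riemannZeta₁.deriv s
  fun_prop (disch := assumption)

lemma auxH_analytic : AnalyticOnNhd ℂ auxH {s | riemannZeta₁ s ≠ 0} := by
  refine DifferentiableOn.analyticOnNhd (fun s hs => (auxH_diffAt hs).differentiableWithinAt) ?_
  exact isOpen_ne_fun differentiable_riemannZeta₁.continuous continuous_const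

lemma auxH_bound : ∃ C > (0:ℝ), ∀ s : ℂ, 1 ≤ s.re → s.re ≤ 2 →
    ‖iteratedDeriv 4 auxH s‖ ≤ C * (1 + |s.im|)^(1/2:ℝ) := by
  obtain ⟨c₁, hc₁, c₂, hc₂, hc, hlow⟩ := zeta_lower
  obtain ⟨C, hC, hup⟩ := zeta_upper
  obtain ⟨D, hD, hder⟩ := zeta_deriv_upper
  have hK : IsCompact (Set.Icc (1:ℝ) 2 ×ℂ Set.Icc (-3:ℝ) 3) := isCompact_Icc.reProdIm isCompact_Icc
  obtain ⟨B, hB⟩ := hK.exists_bound_of_continuousOn (f := iteratedDeriv 4 auxH) (by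
    have := (auxH_analytic.iterated_deriv 4).continuousOn
    rw [← iteratedDeriv_eq_iterate] at this
    refine this.mono fun s hs => ?_
    exact zeta1_ne (Complex.mem_reProdIm.1 hs).1.1)
  set E : ℝ := 32 * (D / c₂ + C) with hE
  refine ⟨|B| + 24 * E * 16 / c₁^4 + 1, by positivity, fun s h1 h2 => ?_⟩
  rcases le_total |s.im| 3 with hsm | hlg
  · have := hB s (Complex.mem_reProdIm.2 ⟨⟨h1, h2⟩, abs_le.1 hsm⟩)
    refine this.trans ?_
    have h3 : 1 ≤ (1+|s.im|)^(1/2:ℝ) := Real.one_le_rpow (by linarith [abs_nonneg s.im]) (by norm_num)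
    have h4 : 0 ≤ 24 * E * 16 / c₁^4 := by positivity
    nlinarith [le_abs_self B, abs_nonneg B]
  set τ := |s.im|^(1/50:ℝ) with hτ
  have hτ1 : 1 ≤ τ := Real.one_le_rpow (by linarith) (by norm_num)
  set r := c₁ / (2 * τ^5) with hr
  have hr0 : 0 < r := by positivity
  have hr1 : r ≤ 1/200 := by
    rw [hr, div_le_iff₀ (by positivity)]
    have : 1 ≤ τ^5 := one_le_pow₀ hτ1
    linarith
  have hball : ∀ z ∈ Metric.closedBall s r, |z.re - s.re| ≤ r ∧ |z.im - s.im| ≤ r := by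
    intro z hz
    rw [mem_closedBall_iff_norm] at hz
    exact ⟨by simpa using (Complex.abs_re_le_norm (z-s)).trans hz, by simpa using (Complex.abs_im_le_norm (z-s)).trans hz⟩
  have him : ∀ z ∈ Metric.closedBall s r, |s.im| - r ≤ |z.im| ∧ |z.im| ≤ |s.im| + r := by
    intro z hz
    have h1 := (hball z hz).2
    have h2 := abs_abs_sub_abs_le_abs_sub z.im s.im
    have := abs_le.1 (h2.trans h1)
    constructor <;> linarith [this.1, this.2]
  have hτz : ∀ z ∈ Metric.closedBall s r, |z.im|^(1/50:ℝ) ≤ 2 * τ ∧ (|z.im|^(1/50:ℝ))^5 ≤ 2 * τ^5 := by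
    intro z hz
    have h5 := him z hz
    have hg : ∀ e : ℝ, 0 ≤ e → e ≤ 1 → |z.im|^e ≤ 2 * |s.im|^e := by
      intro e he he1
      calc |z.im|^e ≤ (2*|s.im|)^e := by gcongr; linarith
        _ = 2^e * |s.im|^e := Real.mul_rpow (by norm_num) (by linarith)
        _ ≤ _ := by
          gcongr
          calc (2:ℝ)^e ≤ 2^(1:ℝ) := Real.rpow_le_rpow_of_exponent_le (by norm_num) he1
            _ = 2 := by norm_num
    refine ⟨hg _ (by norm_num) (by norm_num), ?_⟩
    have := hg (1/10) (by norm_num) (by norm_num)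
    rw [hτ, ← Real.rpow_natCast, ← Real.rpow_natCast, ← Real.rpow_mul (abs_nonneg _), ← Real.rpow_mul (abs_nonneg _)]
    convert this using 2 <;> norm_num
  have hmain : ∀ z ∈ Metric.closedBall s r, riemannZeta₁ z ≠ 0 ∧ ‖auxH z‖ ≤ E * τ^5 := by
    intro z hz
    have h5 := him z hz
    have h6 := abs_le.1 (hball z hz).1
    have h7 := hτz z hz
    have hz1 : z ≠ 1 := by
      rintro rfl
      have := h5.1; simp at this; linarith
    set v := |z.im|^(1/50:ℝ) with hv
    have hv1 : 1 ≤ v := Real.one_le_rpow (by linarith) (by norm_num)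
    have hL := hlow z (by linarith) (by
      have : r ≤ c₁ / v^5 := by rw [hr]; gcongr; exact h7.2
      linarith) (by linarith)
    rw [← hv] at hL
    have hz0 : riemannZeta z ≠ 0 := by
      intro h0; rw [h0] at hL; simp at hL; linarith
    have hzn : 0 < ‖riemannZeta z‖ := norm_pos_iff.2 hz0
    refine ⟨?_, ?_⟩
    · rw [riemannZeta_eq_inv_sub_mul hz1] at hz0
      exact right_ne_zero_of_mul hz0
    · rw [auxH_eq hz1 hz0]
      have a1 := hup z (by linarith) (by linarith) (by linarith)
      have a2 := hder z (by linarith) (by linarith) (by linarith)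
      rw [← hv] at a1 a2
      have a3 : ‖deriv riemannZeta z / riemannZeta z‖ ≤ D / c₂ * v^5 := by
        rw [norm_div, div_le_iff₀ hzn]
        calc ‖deriv riemannZeta z‖ ≤ D * v := a2
          _ = D / c₂ * v * c₂ := by field_simp
          _ ≤ D / c₂ * v * (‖riemannZeta z‖ * v^4) := by gcongr
          _ = _ := by ring
      have a4 : v ≤ v^5 := by
        calc v = v^1 := by ring
          _ ≤ v^5 := pow_le_pow_right₀ hv1 (by norm_num)
      calc _ ≤ ‖deriv riemannZeta z / riemannZeta z‖ + ‖riemannZeta z‖ := by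
            refine (norm_sub_le _ _).trans ?_
            rw [norm_neg]
        _ ≤ D / c₂ * v^5 + C * v^5 := by
          gcongr
          exact a1.trans (by gcongr)
        _ = (D/c₂ + C) * v^5 := by ring
        _ ≤ (D/c₂ + C) * (2 * τ)^5 := by gcongr; exact h7.1
        _ = _ := by rw [hE]; ring
  have hcau := Complex.norm_iteratedDeriv_le_of_forall_mem_sphere_norm_le (f := auxH) (c := s) (R := r) (C := E * τ^5) 4 hr0 ?_ ?_
  · refine hcau.trans ?_
    have : ((4:ℕ).factorial : ℝ) * (E * τ^5) / r^4 = 24 * E * 16 / c₁^4 * τ^25 := by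
      rw [hr]; simp [Nat.factorial]; field_simp; norm_num
    rw [this]
    have h9 : τ^25 ≤ (1+|s.im|)^(1/2:ℝ) := by
      rw [hτ, ← Real.rpow_natCast, ← Real.rpow_mul (abs_nonneg _)]
      norm_num
      gcongr; linarith
    have : 24 * E * 16 / c₁^4 ≤ |B| + 24 * E * 16 / c₁^4 + 1 := by linarith [abs_nonneg B]
    gcongr
  · refine DifferentiableOn.diffContOnCl fun z hz => ?_
    rw [closure_ball _ hr0.ne'] at hz
    exact (auxH_diffAt (hmain z hz).1).differentiableWithinAt
  · intro z hz
    exact (hmain z (Metric.sphere_subset_closedBall hz)).2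


noncomputable def auxb (n : ℕ) : ℝ := (Real.log n) ^ 4 * (ArithmeticFunction.vonMangoldt n - 1)

noncomputable def auxf (n : ℕ) : ℂ := (ArithmeticFunction.vonMangoldt n : ℂ) - 1

lemma auxf_summable {s : ℂ} (hs : 1 < s.re) : LSeriesSummable auxf s := by
  have h1 := ArithmeticFunction.LSeriesSummable_vonMangoldt hs
  have h2 := LSeriesSummable_one_iff.mpr hs
  exact h1.sub h2

lemma auxf_LSeries {s : ℂ} (hs : 1 < s.re) : LSeries auxf s = auxH s := by
  have h1 := ArithmeticFunction.LSeriesSummable_vonMangoldt hs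
  have h2 := LSeriesSummable_one_iff.mpr hs
  have h3 := LSeries_sub h1 h2
  have : auxf = (fun n => (ArithmeticFunction.vonMangoldt n : ℂ)) - 1 := rfl
  rw [this, h3, ArithmeticFunction.LSeries_vonMangoldt_eq_deriv_riemannZeta_div hs,
    LSeries_one_eq_riemannZeta hs, auxH_eq, neg_div]
  · rintro rfl; simp at hs
  · exact riemannZeta_ne_zero_of_one_lt_re hs

lemma auxf_abscissa : LSeries.abscissaOfAbsConv auxf ≤ 1 := by
  apply LSeries.abscissaOfAbsConv_le_of_forall_lt_LSeriesSummable'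
  intro y hy
  apply auxf_summable
  simpa using (by exact_mod_cast hy : (1:ℝ) < y)

lemma auxb_eq : (fun n => (auxb n : ℂ)) = LSeries.logMul^[4] auxf := by
  funext n
  simp only [Function.iterate_succ, Function.iterate_zero, Function.comp, id, LSeries.logMul, auxf, auxb]
  push_cast
  rw [← Complex.natCast_log]
  ring

lemma auxb_summable {s : ℂ} (hs : 1 < s.re) : LSeriesSummable (fun n => (auxb n : ℂ)) s := by
  rw [auxb_eq]
  apply LSeriesSummable_of_abscissaOfAbsConv_lt_re
  rw [LSeries.absicssaOfAbsConv_logPowMul]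
  refine lt_of_le_of_lt auxf_abscissa ?_
  exact_mod_cast hs

lemma auxb_LSeries {s : ℂ} (hs : 1 < s.re) :
    LSeries (fun n => (auxb n : ℂ)) s = iteratedDeriv 4 auxH s := by
  have h := LSeries_iteratedDeriv (f := auxf) 4 (s := s) (lt_of_le_of_lt auxf_abscissa (by exact_mod_cast hs))
  rw [auxb_eq]
  have e : LSeries auxf =ᶠ[nhds s] auxH := by
    filter_upwards [(isOpen_lt continuous_const Complex.continuous_re).mem_nhds hs] with z hz
    exact auxf_LSeries hz
  rw [← e.iteratedDeriv_eq 4, h]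
  norm_num

/-- the kernel -/
noncomputable def auxk (s : ℂ) : ℂ := 1 / s - 1 / (s + 1)

lemma auxk_norm {σ : ℝ} (hσ : 1 ≤ σ) (y : ℝ) :
    ‖auxk (σ + y * Complex.I)‖ ≤ 2 * (1 + ‖y‖) ^ (-2 : ℝ) := by
  set s : ℂ := σ + y * Complex.I with hs
  have hre : s.re = σ := by simp [hs]
  have him : s.im = y := by simp [hs]
  have hs0 : s ≠ 0 := by intro h; rw [h] at hre; simp at hre; linarith
  have hs1 : s + 1 ≠ 0 := by
    intro h
    have : (s + 1).re = 0 := by rw [h]; simp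
    simp [hre] at this; linarith
  have : auxk s = 1 / (s * (s + 1)) := by
    unfold auxk; field_simp; ring
  rw [this, norm_div, norm_one, norm_mul]
  have n1 : ‖s‖ ^ 2 = σ ^ 2 + y ^ 2 := by
    rw [Complex.sq_norm, Complex.normSq_apply, hre, him]; ring
  have n2 : ‖s‖ ≤ ‖s + 1‖ := by
    apply (sq_le_sq₀ (norm_nonneg _) (norm_nonneg _)).mp
    rw [Complex.sq_norm, Complex.sq_norm, Complex.normSq_apply, Complex.normSq_apply]
    simp [hre, him]; nlinarith
  have n3 : (1 + ‖y‖) ^ 2 ≤ 2 * (‖s‖ * ‖s + 1‖) := by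
    have : ‖s‖ ^ 2 ≤ ‖s‖ * ‖s + 1‖ := by rw [sq]; gcongr
    rw [Real.norm_eq_abs]
    nlinarith [sq_abs y, sq_nonneg (1 - |y|)]
  have n4 : 0 < (1 + ‖y‖) := by positivity
  rw [Real.rpow_neg n4.le, show (2:ℝ) = ((2:ℕ):ℝ) by norm_num, Real.rpow_natCast]
  have n5 : 0 < ‖s‖ * ‖s + 1‖ := by positivity
  rw [← div_eq_mul_inv, div_le_div_iff₀ n5 (by positivity)]
  push_cast
  linarith

lemma auxk_cont {σ : ℝ} (hσ : 1 ≤ σ) : Continuous (fun y : ℝ => auxk (σ + y * Complex.I)) := by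
  unfold auxk
  have h1 : ∀ y : ℝ, (σ + y * Complex.I : ℂ) ≠ 0 := by
    intro y h
    have := congrArg Complex.re h
    simp at this; linarith
  have h2 : ∀ y : ℝ, (σ + y * Complex.I + 1: ℂ) ≠ 0 := by
    intro y h
    have := congrArg Complex.re h
    simp at this; linarith
  fun_prop (disch := assumption)

lemma auxk_int {σ : ℝ} (hσ : 1 ≤ σ) :
    MeasureTheory.Integrable (fun y : ℝ => auxk (σ + y * Complex.I)) := by
  have h : MeasureTheory.Integrable (fun y : ℝ => 2 * (1 + ‖y‖) ^ (-2 : ℝ)) :=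
    (integrable_one_add_norm (by simp)).const_mul 2
  exact h.mono' (auxk_cont hσ).aestronglyMeasurable (Eventually.of_forall (auxk_norm hσ))

lemma aux_perron {σ : ℝ} (hσ : 1 ≤ σ) {u : ℝ} (hu : 0 < u) :
    ∫ y : ℝ, (u : ℂ) ^ (-(σ + y * Complex.I)) * auxk (σ + y * Complex.I)
      = 2 * π * ((max (1 - u) 0 : ℝ) : ℂ) := by
  set g : ℝ → ℂ := fun t => Set.indicator (Set.Ioc 0 1) (fun _ => 1 : ℝ → ℂ) t -
    Set.indicator (Set.Ioc 0 1) (fun t => ↑t ^ (1:ℂ) : ℝ → ℂ) t with hg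
  have hm : ∀ s : ℂ, 0 < s.re → HasMellin g s (auxk s) := by
    intro s hs
    have a := hasMellin_one_Ioc hs
    have b := hasMellin_cpow_Ioc 1 (s := s) (by simp; linarith)
    have := hasMellin_sub a.1 b.1
    rw [a.2, b.2] at this
    exact this
  have hgv : ∀ t : ℝ, 0 < t → g t = ((max (1 - t) 0 : ℝ) : ℂ) := by
    intro t ht
    by_cases h : t ≤ 1
    · have : t ∈ Set.Ioc (0:ℝ) 1 := ⟨ht, h⟩
      simp only [hg, Set.indicator_of_mem this, Complex.cpow_one]
      rw [max_eq_left (by linarith)]; push_cast; ring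
    · have : t ∉ Set.Ioc (0:ℝ) 1 := fun h' => h h'.2
      simp only [hg, Set.indicator_of_notMem this]
      rw [max_eq_right (by linarith)]; simp
  have hc : ContinuousAt g u := by
    have : ContinuousAt (fun t : ℝ => ((max (1 - t) 0 : ℝ) : ℂ)) u := by fun_prop
    apply this.congr
    filter_upwards [lt_mem_nhds hu] with t ht
    exact (hgv t ht).symm
  have hk : ∀ y : ℝ, mellin g (σ + y * Complex.I) = auxk (σ + y * Complex.I) := by
    intro y; exact (hm _ (by simp; linarith)).2
  have := mellinInv_mellin_eq σ g hu (hm σ (by simp; linarith)).1 (by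
    unfold Complex.VerticalIntegrable
    simp_rw [hk]
    exact auxk_int hσ) hc
  rw [hgv u hu, mellinInv] at this
  simp_rw [hk, smul_eq_mul] at this
  rw [← this, Complex.real_smul]
  have : (π:ℂ) ≠ 0 := by exact_mod_cast Real.pi_ne_zero
  generalize (∫ y : ℝ, (u : ℂ) ^ (-(σ + y * Complex.I)) * auxk (σ + y * Complex.I)) = W
  push_cast
  field_simp

lemma aux_term_cpow {x : ℝ} (hx : 0 < x) (n : ℕ) (s : ℂ) :
    LSeries.term (fun n => (auxb n : ℂ)) s n * (x : ℂ) ^ s =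
      auxb n * (((n : ℝ) / x : ℝ) : ℂ) ^ (-s) := by
  rcases eq_or_ne n 0 with rfl | hn
  · simp [auxb]
  rw [LSeries.term_of_ne_zero hn, Complex.ofReal_div, Complex.div_cpow_ofReal_nonneg (by positivity) hx.le,
    Complex.cpow_neg, Complex.cpow_neg]
  simp
  ring

lemma smoothed_hasSum {σ x : ℝ} (hσ : 1 < σ) (hx : 0 < x) :
    HasSum (fun n : ℕ => (2 * π * (auxb n * max (1 - n / x) 0 : ℝ) : ℂ))
      (∫ y : ℝ, iteratedDeriv 4 auxH (σ + y * Complex.I) * (x:ℂ) ^ (σ + y * Complex.I : ℂ)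
        * auxk (σ + y * Complex.I)) := by
  set F : ℕ → ℝ → ℂ := fun n y => auxb n * ((((n : ℝ) / x : ℝ) : ℂ) ^ (-(σ + y * Complex.I)) * auxk (σ + y * Complex.I)) with hF
  have hFe : ∀ n y, F n y = LSeries.term (fun n => (auxb n : ℂ)) (σ + y * Complex.I) n *
      ((x:ℂ) ^ (σ + y * Complex.I : ℂ) * auxk (σ + y * Complex.I)) := by
    intro n y
    simp only [hF]
    rw [← mul_assoc, ← mul_assoc, aux_term_cpow hx]
  have hFn : ∀ n y, ‖F n y‖ = ‖LSeries.term (fun n => (auxb n : ℂ)) σ n‖ * (x ^ σ * ‖auxk (σ + y * Complex.I)‖) := by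
    intro n y
    rw [hFe, norm_mul, norm_mul, LSeries.norm_term_eq, LSeries.norm_term_eq,
      Complex.norm_cpow_eq_rpow_re_of_pos hx]
    simp
  have hFi : ∀ n, MeasureTheory.Integrable (F n) := by
    intro n
    rcases eq_or_ne n 0 with rfl | hn
    · simp [hF, auxb]
    have hnx : 0 < (n:ℝ)/x := by positivity
    have := (auxk_int hσ.le).norm.const_mul (‖LSeries.term (fun n => (auxb n : ℂ)) σ n‖ * x ^ σ)
    refine this.mono' ?_ (Eventually.of_forall fun y => ?_)
    · apply Continuous.aestronglyMeasurable
      simp only [hF]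
      apply Continuous.mul continuous_const
      apply Continuous.mul _ (auxk_cont hσ.le)
      apply Continuous.const_cpow (by fun_prop)
      left
      exact_mod_cast hnx.ne'
    · rw [hFn, mul_assoc]
  have hs : Summable fun n => ∫ y, ‖F n y‖ := by
    simp_rw [hFn, MeasureTheory.integral_const_mul]
    apply Summable.mul_right
    exact (auxb_summable (s := σ) (by simpa using hσ)).norm
  have key := MeasureTheory.hasSum_integral_of_summable_integral_norm hFi hs
  convert! key using 1
  · funext n
    rcases eq_or_ne n 0 with rfl | hn
    · simp [hF, auxb]
    have hnx : 0 < (n:ℝ)/x := by positivity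
    simp only [hF]
    rw [MeasureTheory.integral_const_mul, aux_perron hσ.le hnx]
    push_cast; ring
  · congr 1
    funext y
    simp_rw [hFe, tsum_mul_right]
    rw [← auxb_LSeries (by simpa using hσ), mul_assoc]
    rfl

lemma smoothed_bound : ∃ C > (0:ℝ), ∀ x : ℝ, 3 ≤ x →
    |∑ n ∈ Finset.range (⌊x⌋₊ + 1), auxb n * (x - n)| ≤ C * x ^ 2 := by
  obtain ⟨C, hC, hb⟩ := auxH_bound
  set J := ∫ y : ℝ, (1 + ‖y‖) ^ (-(3/2) : ℝ) with hJ
  have hJi : MeasureTheory.Integrable (fun y : ℝ => (1 + ‖y‖) ^ (-(3/2) : ℝ)) :=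
    integrable_one_add_norm (by norm_num)
  have hJ0 : 0 ≤ J := MeasureTheory.integral_nonneg fun y => by positivity
  refine ⟨C * 2 * Real.exp 1 * J + 1, by positivity, fun x hx => ?_⟩
  have hx0 : 0 < x := by linarith
  have hl : 1 ≤ Real.log x := by
    rw [Real.le_log_iff_exp_le hx0]
    linarith [Real.exp_one_lt_d9]
  set σ := 1 + 1 / Real.log x with hσd
  have hσ : 1 < σ := by
    have : 0 < 1 / Real.log x := by positivity
    linarith
  have hσ2 : σ ≤ 2 := by
    have : 1 / Real.log x ≤ 1 := by rw [div_le_one (by linarith)]; exact hl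
    linarith
  have hxσ : x ^ σ = Real.exp 1 * x := by
    rw [hσd, Real.rpow_add hx0, Real.rpow_one, Real.rpow_def_of_pos hx0,
      mul_one_div_cancel (by linarith), mul_comm]
  have hsum := smoothed_hasSum hσ hx0
  have hfin : HasSum (fun n : ℕ => (2 * π * (auxb n * max (1 - n / x) 0 : ℝ) : ℂ))
      (∑ n ∈ Finset.range (⌊x⌋₊ + 1), (2 * π * (auxb n * max (1 - n / x) 0 : ℝ) : ℂ)) := by
    apply hasSum_sum_of_ne_finset_zero
    intro n hn
    have : x < n := by
      rw [Finset.mem_range, not_lt] at hn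
      exact Nat.lt_of_floor_lt hn
    have : 1 - n / x ≤ 0 := by
      rw [sub_nonpos, one_le_div hx0]; exact this.le
    simp [max_eq_right this]
  have heq := hfin.unique hsum
  have hnorm : ‖∫ y : ℝ, iteratedDeriv 4 auxH (σ + y * Complex.I) * (x:ℂ) ^ (σ + y * Complex.I : ℂ)
        * auxk (σ + y * Complex.I)‖ ≤ ∫ y : ℝ, (C * 2 * (Real.exp 1 * x)) * (1 + ‖y‖) ^ (-(3/2) : ℝ) := by
    apply MeasureTheory.norm_integral_le_of_norm_le (hJi.const_mul _)
    refine Eventually.of_forall fun y => ?_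
    rw [norm_mul, norm_mul, Complex.norm_cpow_eq_rpow_re_of_pos hx0]
    have a := hb (σ + y * Complex.I) (by simpa using hσ.le) (by simpa using hσ2)
    have b := auxk_norm hσ.le y
    have e1 : (σ + y * Complex.I : ℂ).re = σ := by simp
    have e2 : (σ + y * Complex.I : ℂ).im = y := by simp
    rw [e2] at a
    rw [e1, hxσ]
    have e3 : (1 + ‖y‖) ^ (-(3/2) : ℝ) = (1 + |y|) ^ (1/2 : ℝ) * (1 + ‖y‖) ^ (-2 : ℝ) := by
      rw [← Real.norm_eq_abs, ← Real.rpow_add (by positivity)]; norm_num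
    rw [e3]
    calc _ ≤ (C * (1 + |y|) ^ (1/2 : ℝ)) * (Real.exp 1 * x) * (2 * (1 + ‖y‖) ^ (-2 : ℝ)) := by
          gcongr
      _ = _ := by ring
  rw [← heq, MeasureTheory.integral_const_mul, ← hJ] at hnorm
  have e : (∑ n ∈ Finset.range (⌊x⌋₊ + 1), (2 * π * (auxb n * max (1 - n / x) 0 : ℝ) : ℂ))
      = ((2 * π / x * ∑ n ∈ Finset.range (⌊x⌋₊ + 1), auxb n * (x - n) : ℝ) : ℂ) := by
    rw [Finset.mul_sum]
    push_cast
    apply Finset.sum_congr rfl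
    intro n hn
    have : (n:ℝ) ≤ x := by
      rw [Finset.mem_range, Nat.lt_succ_iff] at hn
      exact (Nat.le_floor_iff hx0.le).mp hn
    have : 0 ≤ 1 - n / x := by
      rw [sub_nonneg, div_le_one hx0]; exact this
    rw [max_eq_left this]
    have : (x:ℂ) ≠ 0 := by exact_mod_cast hx0.ne'
    push_cast
    field_simp
  rw [e, Complex.norm_real, Real.norm_eq_abs, abs_mul, abs_of_pos (by positivity)] at hnorm
  set S := |∑ n ∈ Finset.range (⌊x⌋₊ + 1), auxb n * (x - n)|
  have h6 : 1 ≤ 2 * π := by linarith [Real.pi_gt_three]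
  have hS : 0 ≤ S := abs_nonneg _
  have : S ≤ 2 * π * S := by nlinarith
  have h7 : 2 * π * S ≤ (C * 2 * (Real.exp 1 * x) * J) * x := by
    have : 2 * π / x * S * x ≤ (C * 2 * (Real.exp 1 * x) * J) * x := by gcongr
    have e : 2 * π / x * S * x = 2 * π * S := by field_simp
    linarith
  nlinarith [sq_nonneg x]


noncomputable def auxB (N : ℕ) : ℝ := ∑ n ∈ Finset.range (N + 1), auxb n
noncomputable def auxA (N : ℕ) : ℝ := ∑ n ∈ Finset.range (N + 1), auxb n * ((N:ℝ) - n)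

lemma auxA_succ (N : ℕ) : auxA (N + 1) = auxA N + auxB N := by
  unfold auxA auxB
  rw [Finset.sum_range_succ _ (N + 1), ← Finset.sum_add_distrib]
  push_cast
  rw [sub_self, mul_zero, add_zero]
  apply Finset.sum_congr rfl
  intro n _; ring

lemma auxA_bound : ∃ C > (0:ℝ), ∀ N : ℕ, |auxA N| ≤ C * (N:ℝ) ^ 2 := by
  obtain ⟨C, hC, h⟩ := smoothed_bound
  refine ⟨C, hC, fun N => ?_⟩
  by_cases hN : 3 ≤ N
  · have := h N (by exact_mod_cast hN)
    rw [Nat.floor_natCast] at this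
    exact this
  · have : auxA N = 0 := by
      have : N = 0 ∨ N = 1 ∨ N = 2 := by omega
      rcases this with rfl | rfl | rfl <;> simp [auxA, auxb, Finset.sum_range_succ]
    rw [this, abs_zero]; positivity

lemma auxB_mono (N : ℕ) (M : ℕ) : ∀ i : ℕ, N + i ≤ M →
    auxB N - i * (Real.log M) ^ 4 ≤ auxB (N + i) := by
  intro i
  induction i with
  | zero => intro _; simp
  | succ i ih =>
    intro h
    have h1 := ih (by omega)
    have e : auxB (N + (i + 1)) = auxB (N + i) + auxb (N + i + 1) := by
      unfold auxB
      rw [← add_assoc, Finset.sum_range_succ _ (N + i + 1)]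
    have h2 : -(Real.log M) ^ 4 ≤ auxb (N + i + 1) := by
      unfold auxb
      have a : 0 ≤ Real.log ((N + i + 1 : ℕ) : ℝ) := Real.log_natCast_nonneg _
      have b : Real.log ((N + i + 1 : ℕ) : ℝ) ≤ Real.log M := by
        apply Real.log_le_log (by positivity)
        exact_mod_cast h
      have c : (Real.log ((N + i + 1 : ℕ) : ℝ)) ^ 4 ≤ (Real.log M) ^ 4 := by gcongr
      have d := ArithmeticFunction.vonMangoldt_nonneg (n := N + i + 1)
      have e' : 0 ≤ (Real.log ((N + i + 1 : ℕ) : ℝ)) ^ 4 * ArithmeticFunction.vonMangoldt (N + i + 1) := by positivity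
      linarith
    rw [e]; push_cast; linarith

lemma auxA_up (N M : ℕ) : ∀ h : ℕ, N + h ≤ M →
    h * auxB N - (h:ℝ) ^ 2 * (Real.log M) ^ 4 ≤ auxA (N + h) - auxA N := by
  intro h
  have hl : 0 ≤ (Real.log M) ^ 4 := by positivity
  induction h with
  | zero => intro _; simp
  | succ h ih =>
    intro hh
    have h1 := ih (by omega)
    have h2 := auxB_mono N M h (by omega)
    rw [← add_assoc, auxA_succ]
    push_cast
    have : 0 ≤ (h:ℝ) * Real.log M ^ 4 := by positivity
    linarith

lemma auxA_down (N : ℕ) : ∀ h : ℕ, h ≤ N →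
    auxA N - auxA (N - h) ≤ h * auxB N + (h:ℝ) ^ 2 * (Real.log N) ^ 4 := by
  intro h
  have hl : 0 ≤ (Real.log N) ^ 4 := by positivity
  induction h with
  | zero => intro _; simp
  | succ h ih =>
    intro hh
    have h1 := ih (by omega)
    have h2 := auxB_mono (N - (h + 1)) N (h + 1) (by omega)
    have e : N - h = N - (h + 1) + 1 := by omega
    rw [e, auxA_succ] at h1
    rw [Nat.sub_add_cancel hh] at h2
    push_cast at *
    have : 0 ≤ (h:ℝ) * Real.log N ^ 4 := by positivity
    linarith

lemma log_sq_le (x : ℝ) (hx : 1 ≤ x) : (Real.log x) ^ 2 ≤ x := by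
  have h0 : 0 ≤ Real.log x := Real.log_nonneg hx
  have h1 := Real.log_le_rpow_div (x := x) (by linarith) (show (0:ℝ) < 1/2 by norm_num)
  have hs : Real.sqrt x ^ 2 = x := Real.sq_sqrt (by linarith)
  have hs0 : 0 < Real.sqrt x := Real.sqrt_pos.mpr (by linarith)
  have h2 : Real.log x = 2 * Real.log (Real.sqrt x) := by
    rw [Real.log_sqrt (by linarith)]; ring
  have h3 : Real.log (Real.sqrt x) ≤ Real.sqrt x / 2 := by
    have := Real.log_le_sub_one_of_pos (show 0 < Real.sqrt x / Real.exp 1 by positivity)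
    rw [Real.log_div hs0.ne' (Real.exp_pos _).ne', Real.log_exp] at this
    have h4 : Real.sqrt x / Real.exp 1 ≤ Real.sqrt x / 2 := by
      gcongr; linarith [Real.exp_one_gt_d9]
    linarith
  have h5 : Real.log x ≤ Real.sqrt x := by linarith
  calc (Real.log x) ^ 2 ≤ (Real.sqrt x) ^ 2 := pow_le_pow_left₀ h0 h5 2
    _ = x := hs

lemma auxB_bound : ∃ C > (0:ℝ), ∀ N : ℕ, 3 ≤ N → |auxB N| ≤ C * N * (Real.log N) ^ 2 := by
  obtain ⟨C, hC, hA⟩ := auxA_bound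
  refine ⟨5 * C + 32, by positivity, fun N hN => ?_⟩
  have hN3 : (3:ℝ) ≤ N := by exact_mod_cast hN
  have hl : 1 ≤ Real.log N := by
    rw [Real.le_log_iff_exp_le (by linarith)]
    linarith [Real.exp_one_lt_d9]
  set L := Real.log N with hL
  have hLN : L ^ 2 ≤ N := log_sq_le N (by linarith)
  set h := ⌈(N:ℝ) / L ^ 2⌉₊ with hh
  have hq : 1 ≤ (N:ℝ) / L ^ 2 := by rw [one_le_div (by positivity)]; exact hLN
  have h1 : (N:ℝ) / L ^ 2 ≤ h := Nat.le_ceil _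
  have h2 : (h:ℝ) ≤ 2 * (N / L ^ 2) := by
    have := Nat.ceil_lt_add_one (show 0 ≤ (N:ℝ) / L ^ 2 by positivity)
    linarith
  have h3 : h ≤ N := by
    apply Nat.ceil_le.mpr
    rw [div_le_iff₀ (by positivity)]
    exact le_mul_of_one_le_right (by positivity) (one_le_pow₀ hl)
  have hpos : 0 < (h:ℝ) := by linarith
  have h3r : (h:ℝ) ≤ N := by exact_mod_cast h3
  have hlog : Real.log ((N + h : ℕ) : ℝ) ≤ 2 * L := by
    have : (2:ℝ) * L = Real.log ((N:ℝ) ^ 2) := by rw [Real.log_pow]; simp [hL]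
    rw [this]
    apply Real.log_le_log
    · push_cast; linarith
    · push_cast; nlinarith
  have hlog0 : 0 ≤ Real.log ((N + h : ℕ) : ℝ) := Real.log_natCast_nonneg _
  have hlog4 : Real.log ((N + h : ℕ) : ℝ) ^ 4 ≤ 16 * L ^ 4 := by
    calc _ ≤ (2 * L) ^ 4 := by gcongr
      _ = _ := by ring
  have up := auxA_up N (N + h) h le_rfl
  have dn := auxA_down N h h3
  have a1 := abs_le.mp (hA (N + h))
  have a2 := abs_le.mp (hA N)
  have a3 := abs_le.mp (hA (N - h))
  have b1 : C * ((N + h : ℕ) : ℝ) ^ 2 ≤ 4 * C * (N:ℝ) ^ 2 := by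
    have : ((N + h : ℕ) : ℝ) ≤ 2 * N := by push_cast; linarith
    calc _ ≤ C * (2 * (N:ℝ)) ^ 2 := by gcongr
      _ = _ := by ring
  have b3 : C * ((N - h : ℕ) : ℝ) ^ 2 ≤ C * (N:ℝ) ^ 2 := by
    have : ((N - h : ℕ) : ℝ) ≤ N := by exact_mod_cast Nat.sub_le _ _
    gcongr
  have c0 : 0 ≤ C * (N:ℝ) ^ 2 := by positivity
  have d1 : (h:ℝ) ^ 2 * Real.log ((N + h : ℕ) : ℝ) ^ 4 ≤ (h:ℝ) ^ 2 * (16 * L ^ 4) := by gcongr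
  have habs : h * |auxB N| ≤ 5 * C * (N:ℝ) ^ 2 + (h:ℝ) ^ 2 * (16 * L ^ 4) := by
    rw [← abs_of_pos hpos, ← abs_mul, abs_of_pos hpos]
    have : 0 ≤ (h:ℝ) ^ 2 * L ^ 4 := by positivity
    rw [abs_le]; constructor <;> linarith
  have e1 : (N:ℝ) ^ 2 ≤ h * (N * L ^ 2) := by
    have : (N:ℝ) ≤ h * L ^ 2 := by rwa [div_le_iff₀ (by positivity)] at h1
    nlinarith
  have e2 : (h:ℝ) * (16 * L ^ 4) ≤ 32 * N * L ^ 2 := by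
    have : (h:ℝ) * L ^ 2 ≤ 2 * N := by
      rw [← mul_div_assoc, le_div_iff₀ (by positivity)] at h2; exact h2
    have hL2 : 0 ≤ L ^ 2 := by positivity
    calc (h:ℝ) * (16 * L ^ 4) = 16 * (h * L ^ 2) * L ^ 2 := by ring
      _ ≤ 16 * (2 * N) * L ^ 2 := by gcongr
      _ = _ := by ring
  have fin : h * |auxB N| ≤ h * ((5 * C + 32) * N * L ^ 2) := by
    have f1 : 5 * C * (N:ℝ) ^ 2 ≤ 5 * C * (h * (N * L ^ 2)) := by gcongr
    have f2 : (h:ℝ) ^ 2 * (16 * L ^ 4) ≤ h * (32 * N * L ^ 2) := by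
      calc _ = h * ((h:ℝ) * (16 * L ^ 4)) := by ring
        _ ≤ _ := by gcongr
    calc _ ≤ _ := habs
      _ ≤ 5 * C * (h * (N * L ^ 2)) + h * (32 * N * L ^ 2) := by linarith
      _ = _ := by ring
  exact le_of_mul_le_mul_left fin hpos


noncomputable def auxa (n : ℕ) : ℝ := (ArithmeticFunction.vonMangoldt n - 1) / n
noncomputable def auxT (N : ℕ) : ℝ := ∑ n ∈ Finset.range (N + 1), auxa n
noncomputable def auxw (n : ℕ) : ℝ := 1 / (n * (Real.log n) ^ 4)

lemma auxT_succ (N : ℕ) : auxT (N + 1) = auxT N + auxa (N + 1) := by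
  unfold auxT; rw [Finset.sum_range_succ _ (N + 1)]
lemma auxB_succ (N : ℕ) : auxB (N + 1) = auxB N + auxb (N + 1) := by
  unfold auxB; rw [Finset.sum_range_succ _ (N + 1)]

lemma log_nat_ge_one {N : ℕ} (hN : 3 ≤ N) : 1 ≤ Real.log N := by
  have hN3 : (3:ℝ) ≤ N := by exact_mod_cast hN
  rw [Real.le_log_iff_exp_le (by linarith)]
  linarith [Real.exp_one_lt_d9]

lemma auxa_eq {n : ℕ} (hn : 3 ≤ n) : auxa n = auxb n * auxw n := by
  have h1 := log_nat_ge_one hn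
  have : (n:ℝ) ≠ 0 := by positivity
  unfold auxa auxb auxw
  field_simp

lemma auxw_diff {n : ℕ} (hn : 3 ≤ n) :
    n * (Real.log n) ^ 2 * |auxw n - auxw (n + 1)| ≤
      10 * (1 / Real.log n - 1 / Real.log ((n + 1 : ℕ) : ℝ)) := by
  have ha1 := log_nat_ge_one hn
  have hn3 : (3:ℝ) ≤ n := by exact_mod_cast hn
  have hn0 : (0:ℝ) < n := by linarith
  unfold auxw
  set a := Real.log n with ha
  set c := Real.log ((n + 1 : ℕ) : ℝ) with hc
  have hac : a ≤ c := Real.log_le_log hn0 (by push_cast; linarith)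
  have hc2 : c ≤ 2 * a := by
    have : (2:ℝ) * a = Real.log ((n:ℝ) ^ 2) := by rw [Real.log_pow]; simp [ha]
    rw [this]
    apply Real.log_le_log (by positivity)
    push_cast; nlinarith
  have hd : c - a = Real.log (((n:ℝ) + 1) / n) := by
    rw [Real.log_div (by positivity) (by positivity), hc, ha]; push_cast; rfl
  have hd1 : n * (c - a) ≤ 1 := by
    have := Real.log_le_sub_one_of_pos (show 0 < ((n:ℝ) + 1) / n by positivity)
    rw [← hd] at this
    have e : ((n:ℝ) + 1) / n - 1 = 1 / n := by field_simp; ring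
    rw [e, le_div_iff₀ hn0] at this
    linarith
  have hd2 : 1 ≤ (n + 1) * (c - a) := by
    have := Real.one_sub_inv_le_log_of_pos (show 0 < ((n:ℝ) + 1) / n by positivity)
    rw [← hd] at this
    have e : 1 - (((n:ℝ) + 1) / n)⁻¹ = 1 / (n + 1) := by field_simp; ring
    rw [e, div_le_iff₀ (by positivity)] at this
    linarith
  have hc1 : 1 ≤ c := by linarith
  have hc0 : 0 < c := by linarith
  have ha0 : 0 < a := by linarith
  have p4 : a ^ 4 ≤ c ^ 4 := by gcongr
  have e1 : 1 / (n * a ^ 4) - 1 / (((n + 1 : ℕ) : ℝ) * c ^ 4)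
      = (c ^ 4 + n * (c ^ 4 - a ^ 4)) / (n * (n + 1) * a ^ 4 * c ^ 4) := by
    push_cast; field_simp; ring
  have e2 : n * (c ^ 4 - a ^ 4) ≤ 4 * c ^ 4 := by
    have f : c ^ 4 - a ^ 4 = (c - a) * (c ^ 3 + c ^ 2 * a + c * a ^ 2 + a ^ 3) := by ring
    have g : c ^ 3 + c ^ 2 * a + c * a ^ 2 + a ^ 3 ≤ 4 * c ^ 3 := by
      have : c ^ 2 * a ≤ c ^ 2 * c := by gcongr
      have : c * a ^ 2 ≤ c * c ^ 2 := by gcongr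
      have : a ^ 3 ≤ c ^ 3 := by gcongr
      nlinarith
    rw [f, ← mul_assoc]
    have : 0 ≤ c ^ 3 + c ^ 2 * a + c * a ^ 2 + a ^ 3 := by positivity
    have k : c ^ 3 * 1 ≤ c ^ 3 * c := by gcongr
    nlinarith
  have e3 : 0 ≤ n * (c ^ 4 - a ^ 4) := mul_nonneg hn0.le (by linarith)
  rw [e1, abs_of_nonneg (by positivity)]
  have e4 : 1 / a - 1 / c = (c - a) / (a * c) := by field_simp
  rw [e4]
  calc _ ≤ n * a ^ 2 * ((5 * c ^ 4) / (n * (n + 1) * a ^ 4 * c ^ 4)) := by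
        gcongr; linarith
    _ = 5 * 1 / ((n + 1) * a ^ 2) := by field_simp
    _ ≤ 5 * ((n + 1) * (c - a)) / ((n + 1) * a ^ 2) := by gcongr
    _ = 5 * (c - a) / (a * a) := by field_simp
    _ = 10 * (c - a) / (a * (2 * a)) := by field_simp; ring
    _ ≤ 10 * (c - a) / (a * c) := by
        have : 0 ≤ c - a := by linarith
        gcongr
    _ = _ := by ring

lemma auxT_cauchy : ∃ C > (0:ℝ), ∃ ℓ : ℝ, ∀ N : ℕ, 3 ≤ N → |auxT N - ℓ| ≤ C / Real.log N := by
  obtain ⟨C, hC, hB⟩ := auxB_bound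
  set Q : ℕ → ℝ := fun N => auxT N - auxB N * auxw N with hQ
  have step : ∀ N, 3 ≤ N → |Q (N + 1) - Q N| ≤ 10 * C * (1 / Real.log N - 1 / Real.log ((N + 1 : ℕ) : ℝ)) := by
    intro N hN
    have e : Q (N + 1) - Q N = auxB N * (auxw N - auxw (N + 1)) := by
      simp only [hQ]
      rw [auxT_succ, auxB_succ, auxa_eq (by omega)]; ring
    rw [e, abs_mul]
    calc _ ≤ (C * N * (Real.log N) ^ 2) * |auxw N - auxw (N + 1)| := by
          gcongr; exact hB N hN
      _ = C * (N * (Real.log N) ^ 2 * |auxw N - auxw (N + 1)|) := by ring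
      _ ≤ C * (10 * (1 / Real.log N - 1 / Real.log ((N + 1 : ℕ) : ℝ))) := by
          exact mul_le_mul_of_nonneg_left (auxw_diff hN) hC.le
      _ = _ := by ring
  have diff : ∀ M, 3 ≤ M → ∀ N, M ≤ N → |Q N - Q M| ≤ 10 * C * (1 / Real.log M - 1 / Real.log N) := by
    intro M hM N hN
    induction N, hN using Nat.le_induction with
    | base => simp
    | succ N hN ih =>
      have := step N (by omega)
      calc |Q (N + 1) - Q M| ≤ |Q (N + 1) - Q N| + |Q N - Q M| := abs_sub_le _ _ _
        _ ≤ _ := by linarith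
  have diff' : ∀ M, 3 ≤ M → ∀ N, M ≤ N → |Q N - Q M| ≤ 10 * C / Real.log M := by
    intro M hM N hN
    have := diff M hM N hN
    have h0 : 0 ≤ 1 / Real.log N := by
      have := log_nat_ge_one (hM.trans hN); positivity
    calc _ ≤ _ := this
      _ ≤ 10 * C * (1 / Real.log M) := by gcongr; linarith
      _ = _ := by ring
  have hlim0 : Tendsto (fun M : ℕ => 10 * C / Real.log M) atTop (nhds 0) :=
    Tendsto.div_atTop tendsto_const_nhds (Real.tendsto_log_atTop.comp tendsto_natCast_atTop_atTop)
  have hcau : CauchySeq Q := by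
    rw [Metric.cauchySeq_iff']
    intro ε hε
    obtain ⟨M, hM1, hM2⟩ := ((hlim0.eventually (gt_mem_nhds hε)).and (eventually_ge_atTop 3)).exists
    refine ⟨M, fun n hn => ?_⟩
    rw [Real.dist_eq]
    exact (diff' M hM2 n hn).trans_lt hM1
  obtain ⟨ℓ, hℓ⟩ := cauchySeq_tendsto_of_complete hcau
  refine ⟨11 * C, by positivity, ℓ, fun N hN => ?_⟩
  have h1 : |ℓ - Q N| ≤ 10 * C / Real.log N := by
    have : Tendsto (fun n => |Q n - Q N|) atTop (nhds |ℓ - Q N|) := (hℓ.sub_const _).abs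
    exact le_of_tendsto this ((eventually_ge_atTop N).mono fun n hn => diff' N hN n hn)
  have hl := log_nat_ge_one hN
  have hn0 : (0:ℝ) < N := by positivity
  have h2 : |auxB N * auxw N| ≤ C / Real.log N := by
    rw [abs_mul]
    have : |auxw N| = 1 / (N * (Real.log N) ^ 4) := by
      unfold auxw; rw [abs_of_pos (by positivity)]
    rw [this]
    calc _ ≤ (C * N * (Real.log N) ^ 2) * (1 / (N * (Real.log N) ^ 4)) := by
          gcongr; exact hB N hN
      _ = C / (Real.log N * Real.log N) := by field_simp
      _ ≤ C / (1 * Real.log N) := by gcongr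
      _ = _ := by rw [one_mul]
  have e : auxT N - ℓ = -(ℓ - Q N) + auxB N * auxw N := by simp only [hQ]; ring
  rw [e]
  calc _ ≤ |-(ℓ - Q N)| + |auxB N * auxw N| := abs_add_le _ _
    _ ≤ 10 * C / Real.log N + C / Real.log N := by rw [abs_neg]; gcongr
    _ = _ := by ring

lemma abel_aux {D : ℕ → ℝ} {ℓ K ε σ : ℝ} {M : ℕ} (hσ : 0 < σ)
    (hD0 : D 0 = -ℓ) (hK : ∀ n, |D n| ≤ K) (hM : 1 ≤ M) (hε : ∀ n, M ≤ n → |D n| ≤ ε) :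
    ∀ N, M ≤ N → |∑ n ∈ Finset.range N, (D (n + 1) - D n) * ((n + 1 : ℕ) : ℝ) ^ (-σ) - ℓ - D N * (N:ℝ) ^ (-σ)|
      ≤ K * (1 - (M:ℝ) ^ (-σ)) + ε * ((M:ℝ) ^ (-σ) - (N:ℝ) ^ (-σ)) := by
  have anti : ∀ n : ℕ, 1 ≤ n → ((n + 1 : ℕ) : ℝ) ^ (-σ) ≤ (n:ℝ) ^ (-σ) := by
    intro n hn
    apply Real.rpow_le_rpow_of_nonpos (by exact_mod_cast hn) (by push_cast; linarith) (by linarith)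
  set S : ℕ → ℝ := fun N => ∑ n ∈ Finset.range N, (D (n + 1) - D n) * ((n + 1 : ℕ) : ℝ) ^ (-σ) - ℓ - D N * (N:ℝ) ^ (-σ) with hS
  have step : ∀ N, S (N + 1) = S N + D N * ((N:ℝ) ^ (-σ) - ((N + 1 : ℕ) : ℝ) ^ (-σ)) := by
    intro N
    simp only [hS]
    rw [Finset.sum_range_succ]; ring
  have st : ∀ N κ, 1 ≤ N → |D N| ≤ κ → |S (N + 1)| ≤ |S N| + κ * ((N:ℝ) ^ (-σ) - ((N + 1 : ℕ) : ℝ) ^ (-σ)) := by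
    intro N κ hN hκ
    rw [step]
    refine (abs_add_le _ _).trans ?_
    have := anti N hN
    rw [abs_mul, abs_of_nonneg (sub_nonneg.mpr this)]
    have : 0 ≤ (N:ℝ) ^ (-σ) - ((N + 1 : ℕ) : ℝ) ^ (-σ) := sub_nonneg.mpr this
    gcongr
  have A : ∀ N, 1 ≤ N → |S N| ≤ K * (1 - (N:ℝ) ^ (-σ)) := by
    intro N hN
    induction N, hN using Nat.le_induction with
    | base => simp [hS, hD0]
    | succ N hN ih => linarith [st N K hN (hK N)]
  intro N hN
  induction N, hN using Nat.le_induction with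
  | base => rw [sub_self, mul_zero, add_zero]; exact A M hM
  | succ N hN ih =>
    have := st N ε (hM.trans hN) (hε N hN)
    simp only [hS] at this ih ⊢
    linarith

lemma auxT_limit : ∃ C > (0:ℝ), ∀ N : ℕ, 3 ≤ N →
    |auxT N + 2 * Real.eulerMascheroniConstant| ≤ C / Real.log N := by
  obtain ⟨C, hC, ℓ, hT⟩ := auxT_cauchy
  suffices h : ℓ = -2 * Real.eulerMascheroniConstant by
    refine ⟨C, hC, fun N hN => ?_⟩
    have := hT N hN
    rw [h] at this
    convert! this using 2; ring
  set D : ℕ → ℝ := fun n => auxT n - ℓ with hD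
  have hlim0 : Tendsto (fun M : ℕ => C / Real.log M) atTop (nhds 0) :=
    Tendsto.div_atTop tendsto_const_nhds (Real.tendsto_log_atTop.comp tendsto_natCast_atTop_atTop)
  have hDlim : Tendsto D atTop (nhds 0) := by
    apply squeeze_zero_norm' _ hlim0
    filter_upwards [eventually_ge_atTop 3] with N hN
    exact hT N hN
  obtain ⟨K, hK⟩ : ∃ K, ∀ n, |D n| ≤ K := by
    obtain ⟨K, hK⟩ := (Metric.isBounded_range_of_tendsto D hDlim).exists_norm_le
    exact ⟨K, fun n => hK _ ⟨n, rfl⟩⟩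
  have hD0 : D 0 = -ℓ := by simp [hD, auxT, auxa]
  have hsum : ∀ σ : ℝ, 0 < σ → Tendsto (fun N => ∑ n ∈ Finset.range N, (D (n + 1) - D n) * ((n + 1 : ℕ) : ℝ) ^ (-σ))
      atTop (nhds (auxH (1 + σ)).re) := by
    intro σ hσ
    have h1 := (auxf_summable (s := 1 + σ) (by simpa using hσ)).hasSum
    have h2 := Complex.hasSum_re h1
    change HasSum _ (LSeries auxf (1 + σ)).re at h2
    rw [auxf_LSeries (by simpa using hσ)] at h2
    have h3 := (tendsto_add_atTop_iff_nat 1).mpr h2.tendsto_sum_nat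
    refine h3.congr fun N => ?_
    rw [Finset.sum_range_succ']
    rw [LSeries.term_zero, Complex.zero_re, add_zero]
    apply Finset.sum_congr rfl
    intro n _
    rw [LSeries.term_of_ne_zero (Nat.succ_ne_zero n)]
    have hp : (0:ℝ) < ((n + 1 : ℕ) : ℝ) := by positivity
    have e1 : D (n + 1) - D n = auxa (n + 1) := by simp only [hD]; rw [auxT_succ]; ring
    rw [e1]
    have e2 : ((n + 1 : ℕ) : ℂ) ^ (1 + σ : ℂ) = (((((n + 1 : ℕ) : ℝ)) ^ (1 + σ) : ℝ) : ℂ) := by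
      rw [Complex.ofReal_cpow hp.le]; push_cast; rfl
    rw [e2, show auxf (n + 1) = ((ArithmeticFunction.vonMangoldt (n + 1) - 1 : ℝ) : ℂ) by simp [auxf],
      ← Complex.ofReal_div, Complex.ofReal_re, Real.rpow_add hp, Real.rpow_one, Real.rpow_neg hp.le, auxa]
    field_simp
  have hHlim : Tendsto (fun σ : ℝ => (auxH (1 + σ)).re) (nhdsWithin 0 (Set.Ioi 0)) (nhds (-2 * Real.eulerMascheroniConstant)) := by
    have c : ContinuousAt auxH 1 := (auxH_diffAt (zeta1_ne (by simp))).continuousAt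
    have c2 : ContinuousAt (fun σ : ℝ => (auxH (1 + σ)).re) 0 := by
      apply Complex.continuous_re.continuousAt.comp
      apply ContinuousAt.comp (f := fun σ : ℝ => (1 + σ : ℂ)) (g := auxH)
      · simpa using c
      · fun_prop
    have := c2.tendsto
    simp only [Complex.ofReal_zero, add_zero, auxH_one] at this
    refine (this.mono_left nhdsWithin_le_nhds).trans ?_
    simp
  have key : ∀ ε > 0, |(-2 * Real.eulerMascheroniConstant) - ℓ| ≤ ε := by
    intro ε hε
    obtain ⟨M, hM⟩ := eventually_atTop.mp (hDlim.eventually (Metric.ball_mem_nhds 0 hε))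
    set M' := max M 1
    have hb : ∀ σ : ℝ, 0 < σ → |(auxH (1 + σ)).re - ℓ| ≤ K * (1 - (M':ℝ) ^ (-σ)) + ε * (M':ℝ) ^ (-σ) := by
      intro σ hσ
      have h := abel_aux (D := D) (ℓ := ℓ) (K := K) (ε := ε) (M := M') hσ hD0 hK (le_max_right _ _)
        (fun n hn => by
          have := hM n ((le_max_left _ _).trans hn)
          simp only [Real.dist_eq, sub_zero] at this
          exact this.le)
      have hN : Tendsto (fun N : ℕ => (N:ℝ) ^ (-σ)) atTop (nhds 0) :=
        (tendsto_rpow_neg_atTop hσ).comp tendsto_natCast_atTop_atTop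
      have l1 := (((hsum σ hσ).sub_const ℓ).sub (hDlim.mul hN)).abs
      have l2 : Tendsto (fun N : ℕ => K * (1 - (M':ℝ) ^ (-σ)) + ε * ((M':ℝ) ^ (-σ) - (N:ℝ) ^ (-σ))) atTop
          (nhds (K * (1 - (M':ℝ) ^ (-σ)) + ε * ((M':ℝ) ^ (-σ) - 0))) :=
        ((hN.const_sub _).const_mul _).const_add _
      have := le_of_tendsto_of_tendsto l1 l2 ((eventually_ge_atTop M').mono h)
      simpa using this
    have hM'0 : (M':ℝ) ≠ 0 := by
      have : 1 ≤ M' := le_max_right _ _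
      positivity
    have hp : Tendsto (fun σ : ℝ => (M':ℝ) ^ (-σ)) (nhdsWithin 0 (Set.Ioi 0)) (nhds 1) := by
      have : ContinuousAt (fun σ : ℝ => (M':ℝ) ^ (-σ)) 0 := by
        apply ContinuousAt.rpow continuousAt_const (by fun_prop)
        left; exact hM'0
      have := this.tendsto
      simp only [neg_zero, Real.rpow_zero] at this
      exact this.mono_left nhdsWithin_le_nhds
    have l3 := (hHlim.sub_const ℓ).abs
    have l4 := ((hp.const_sub 1).const_mul K).add (hp.const_mul ε)
    have := le_of_tendsto_of_tendsto l3 l4 (eventually_mem_nhdsWithin.mono fun σ hσ => hb σ hσ)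
    simpa using this
  have := le_of_forall_pos_le_add (a := |(-2 * Real.eulerMascheroniConstant) - ℓ|) (b := 0)
    (fun ε hε => by simpa using key ε hε)
  have := abs_nonpos_iff.mp this
  linarith


lemma sum_range_eq_Ioc (f : ℕ → ℝ) (h : f 0 = 0) (N : ℕ) :
    ∑ n ∈ Finset.range (N + 1), f n = ∑ n ∈ Finset.Ioc 0 N, f n := by
  rw [Finset.range_eq_Ico, Finset.sum_eq_sum_Ico_succ_bot (by omega), h, zero_add]
  apply Finset.sum_congr _ (fun _ _ => rfl)
  ext n; simp; omega

lemma harmonic_Ioc (N : ℕ) : ((harmonic N : ℚ) : ℝ) = ∑ n ∈ Finset.Ioc 0 N, 1 / (n:ℝ) := by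
  rw [← sum_range_eq_Ioc _ (by simp), Finset.sum_range_succ', harmonic]
  push_cast
  simp

lemma log_succ_bounds {n : ℕ} (hn : 1 ≤ n) :
    n * (Real.log ((n + 1 : ℕ) : ℝ) - Real.log n) ≤ 1 ∧
      1 ≤ (n + 1) * (Real.log ((n + 1 : ℕ) : ℝ) - Real.log n) := by
  have hn0 : (0:ℝ) < n := by exact_mod_cast hn
  have hd : Real.log ((n + 1 : ℕ) : ℝ) - Real.log n = Real.log (((n:ℝ) + 1) / n) := by
    rw [Real.log_div (by positivity) (by positivity)]; push_cast; rfl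
  constructor
  · have := Real.log_le_sub_one_of_pos (show 0 < ((n:ℝ) + 1) / n by positivity)
    rw [← hd] at this
    have e : ((n:ℝ) + 1) / n - 1 = 1 / n := by field_simp; ring
    rw [e, le_div_iff₀ hn0] at this
    linarith
  · have := Real.one_sub_inv_le_log_of_pos (show 0 < ((n:ℝ) + 1) / n by positivity)
    rw [← hd] at this
    have e : 1 - (((n:ℝ) + 1) / n)⁻¹ = 1 / (n + 1) := by field_simp; ring
    rw [e, div_le_iff₀ (by positivity)] at this
    linarith

lemma mertens_strong : ∃ C > (0:ℝ), ∀ N : ℕ, 3 ≤ N →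
    |∑ n ∈ Finset.Ioc 0 N, ArithmeticFunction.vonMangoldt n / (n:ℝ) - Real.log N
      + Real.eulerMascheroniConstant| ≤ C / Real.log N := by
  obtain ⟨C, hC, hT⟩ := auxT_limit
  refine ⟨C + 1, by positivity, fun N hN => ?_⟩
  have h1 := hT N hN
  have hl := log_nat_ge_one hN
  have hn0 : (0:ℝ) < N := by positivity
  have e : auxT N = ∑ n ∈ Finset.Ioc 0 N, ArithmeticFunction.vonMangoldt n / (n:ℝ) - harmonic N := by
    rw [harmonic_Ioc, ← Finset.sum_sub_distrib, auxT, sum_range_eq_Ioc _ (by simp [auxa])]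
    apply Finset.sum_congr rfl
    intro n _; unfold auxa; ring
  have g1 := Real.eulerMascheroniSeq_lt_eulerMascheroniConstant N
  have g2 := Real.eulerMascheroniConstant_lt_eulerMascheroniSeq' N
  unfold Real.eulerMascheroniSeq at g1
  rw [Real.eulerMascheroniSeq', if_neg (by omega)] at g2
  have g3 := (log_succ_bounds (n := N) (by omega)).1
  push_cast at g3
  have g4 : Real.log (N + 1) - Real.log N ≤ 1 / Real.log N := by
    have : Real.log (N + 1) - Real.log N ≤ 1 / N := by
      rw [le_div_iff₀ hn0]; linarith
    have h5 : Real.log N ≤ N := by linarith [Real.log_le_sub_one_of_pos hn0]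
    exact this.trans (one_div_le_one_div_of_le (by linarith) h5)
  rw [e, abs_le] at h1
  have : (C + 1) / Real.log N = C / Real.log N + 1 / Real.log N := by ring
  rw [this, abs_le]
  constructor <;> linarith [h1.1, h1.2]

lemma sum_log_bounds : ∀ N : ℕ, 1 ≤ N →
    N * Real.log N - N ≤ ∑ n ∈ Finset.Ioc 0 N, Real.log n ∧
    ∑ n ∈ Finset.Ioc 0 N, Real.log n ≤ N * Real.log N - N + 1 + Real.log N := by
  intro N hN
  induction N, hN using Nat.le_induction with
  | base => simp
  | succ N hN ih =>
    have h := log_succ_bounds hN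
    rw [Finset.sum_Ioc_succ_top (by omega)]
    push_cast at *
    constructor <;> linarith [h.1, h.2, ih.1, ih.2]

lemma vM_fract : ∃ C > (0:ℝ), ∀ x : ℝ, 4 ≤ x →
    |∑ n ∈ Finset.Ioc 0 ⌊x⌋₊, ArithmeticFunction.vonMangoldt n * Int.fract (x / n)
      - (1 - Real.eulerMascheroniConstant) * x| ≤ C * x / Real.log x := by
  obtain ⟨C, hC, hM⟩ := mertens_strong
  refine ⟨2 * C + 4, by positivity, fun x hx => ?_⟩
  have hx0 : 0 < x := by linarith
  set N := ⌊x⌋₊ with hN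
  have hN4 : 4 ≤ N := Nat.le_floor (by exact_mod_cast hx)
  have hN4' : (4:ℝ) ≤ N := by exact_mod_cast hN4
  have hNx : (N:ℝ) ≤ x := Nat.floor_le hx0.le
  have hxN : x < N + 1 := Nat.lt_floor_add_one x
  have hl := log_nat_ge_one (show 3 ≤ N by omega)
  have hlx : Real.log N ≤ Real.log x := Real.log_le_log (by linarith) hNx
  have hlx2 : Real.log x ≤ 2 * Real.log N := by
    have : (2:ℝ) * Real.log N = Real.log ((N:ℝ) ^ 2) := by rw [Real.log_pow]; simp
    rw [this]
    apply Real.log_le_log hx0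
    nlinarith
  have hfl : ∑ n ∈ Finset.Ioc 0 N, ArithmeticFunction.vonMangoldt n * ((N / n : ℕ) : ℝ)
      = ∑ n ∈ Finset.Ioc 0 N, Real.log n := by
    have := ArithmeticFunction.sum_Ioc_mul_zeta_eq_sum ArithmeticFunction.vonMangoldt N
    rw [← this, ArithmeticFunction.vonMangoldt_mul_zeta]
    rfl
  have e : ∑ n ∈ Finset.Ioc 0 N, ArithmeticFunction.vonMangoldt n * Int.fract (x / n)
      = x * ∑ n ∈ Finset.Ioc 0 N, ArithmeticFunction.vonMangoldt n / (n:ℝ)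
        - ∑ n ∈ Finset.Ioc 0 N, Real.log n := by
    rw [← hfl, Finset.mul_sum, ← Finset.sum_sub_distrib]
    apply Finset.sum_congr rfl
    intro n _
    have : ((N / n : ℕ) : ℝ) = (⌊x / n⌋ : ℝ) := by
      rw [hN, ← Nat.floor_div_natCast, natCast_floor_eq_intCast_floor (by positivity)]
    rw [this, Int.fract]; ring
  have hS := sum_log_bounds N (by omega)
  have hm := abs_le.mp (hM N (by omega))
  set A := ∑ n ∈ Finset.Ioc 0 N, ArithmeticFunction.vonMangoldt n / (n:ℝ)
  set L := ∑ n ∈ Finset.Ioc 0 N, Real.log n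
  set γ := Real.eulerMascheroniConstant
  rw [e]
  have b1 : x * (C / Real.log N) ≤ 2 * C * x / Real.log x := by
    rw [mul_div_assoc', div_le_div_iff₀ (by linarith) (by linarith)]
    have : 0 ≤ C * x := by positivity
    nlinarith
  have b2 : Real.log x ≤ x / Real.log x := by
    rw [le_div_iff₀ (by linarith), ← sq]; exact log_sq_le x (by linarith)
  have b3 : (2 * C + 4) * x / Real.log x = 2 * C * x / Real.log x + 4 * (x / Real.log x) := by ring
  rw [b3]
  have c1 : x * (A - Real.log N + γ) ≤ x * (C / Real.log N) := by gcongr; exact hm.2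
  have c2 : x * (-(C / Real.log N)) ≤ x * (A - Real.log N + γ) := by gcongr; exact hm.1
  have d1 : 0 ≤ (x - N) * Real.log N := mul_nonneg (by linarith) (by linarith)
  have d2 : (x - N) * Real.log N ≤ 1 * Real.log N := by gcongr; linarith
  rw [abs_le]
  constructor <;> linarith [hS.1, hS.2]

lemma prime_fract : ∃ C > (0:ℝ), ∀ x : ℝ, 4 ≤ x →
    |∑ p ∈ (Finset.Ioc 0 ⌊x⌋₊).filter Nat.Prime, Real.log p * Int.fract (x / p)
      - (1 - Real.eulerMascheroniConstant) * x| ≤ C * x / Real.log x := by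
  obtain ⟨C, hC, h⟩ := vM_fract
  refine ⟨C + 8, by positivity, fun x hx => ?_⟩
  have hx0 : 0 < x := by linarith
  have h1 := h x hx
  have hl : 0 < Real.log x := Real.log_pos (by linarith)
  have e := Finset.sum_filter_add_sum_filter_not (Finset.Ioc 0 ⌊x⌋₊) Nat.Prime
    (fun n => ArithmeticFunction.vonMangoldt n * Int.fract (x / n))
  have e1 : ∑ p ∈ (Finset.Ioc 0 ⌊x⌋₊).filter Nat.Prime, ArithmeticFunction.vonMangoldt p * Int.fract (x / p)
      = ∑ p ∈ (Finset.Ioc 0 ⌊x⌋₊).filter Nat.Prime, Real.log p * Int.fract (x / p) := by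
    apply Finset.sum_congr rfl
    intro p hp
    rw [ArithmeticFunction.vonMangoldt_apply_prime (Finset.mem_filter.mp hp).2]
  rw [e1] at e
  have hn0 : 0 ≤ ∑ n ∈ (Finset.Ioc 0 ⌊x⌋₊).filter (fun n => ¬ n.Prime), ArithmeticFunction.vonMangoldt n * Int.fract (x / n) :=
    Finset.sum_nonneg fun n _ => mul_nonneg ArithmeticFunction.vonMangoldt_nonneg (Int.fract_nonneg _)
  have hn1 : ∑ n ∈ (Finset.Ioc 0 ⌊x⌋₊).filter (fun n => ¬ n.Prime), ArithmeticFunction.vonMangoldt n * Int.fract (x / n)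
      ≤ 8 * x / Real.log x := by
    calc _ ≤ ∑ n ∈ (Finset.Ioc 0 ⌊x⌋₊).filter (fun n => ¬ n.Prime), ArithmeticFunction.vonMangoldt n := by
          apply Finset.sum_le_sum
          intro n _
          exact mul_le_of_le_one_right ArithmeticFunction.vonMangoldt_nonneg (Int.fract_lt_one _).le
      _ = Chebyshev.psi x - Chebyshev.theta x := by
          rw [Chebyshev.psi_sub_theta_eq_sum_not_prime]
      _ ≤ 2 * √x * Real.log x := Chebyshev.psi_sub_theta_le (by linarith)
      _ ≤ _ := by
          rw [le_div_iff₀ hl]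
          have a := log_sq_le (√x) (by rw [Real.one_le_sqrt]; linarith)
          rw [Real.log_sqrt hx0.le] at a
          have b : √x * √x = x := Real.mul_self_sqrt hx0.le
          have c : 0 ≤ √x := Real.sqrt_nonneg x
          have d : √x * ((Real.log x / 2) ^ 2) ≤ √x * √x := by gcongr
          nlinarith
  have b3 : (C + 8) * x / Real.log x = C * x / Real.log x + 8 * x / Real.log x := by ring
  rw [b3]
  rw [abs_le] at h1 ⊢
  have : 0 ≤ 8 * x / Real.log x := by positivity
  constructor <;> linarith [h1.1, h1.2]

theorem sum_fract_x_div_p_asymptotic :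
    ∃ C > (0:ℝ), ∀ᶠ x : ℝ in atTop,
      |(∑ p ∈ (Finset.range (⌊x⌋₊ + 1)).filter Nat.Prime, Int.fract (x / p)) -
          (1 - Real.eulerMascheroniConstant) * x / Real.log x| ≤
        C * x / (Real.log x) ^ 2 := by
  obtain ⟨C, hC, h⟩ := prime_fract
  obtain ⟨D, hD, hb⟩ := Chebyshev.primeCounting_sub_theta_div_log_isBigO.exists_pos
  refine ⟨C + D, by positivity, ?_⟩
  filter_upwards [hb.bound, eventually_ge_atTop 4] with x hx1 hx
  have hx0 : 0 < x := by linarith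
  have hl : 0 < Real.log x := Real.log_pos (by linarith)
  have hs : (Finset.range (⌊x⌋₊ + 1)).filter Nat.Prime = (Finset.Ioc 0 ⌊x⌋₊).filter Nat.Prime := by
    ext p
    simp only [Finset.mem_filter, Finset.mem_range, Finset.mem_Ioc]
    constructor
    · rintro ⟨a, b⟩; exact ⟨⟨b.pos, by omega⟩, b⟩
    · rintro ⟨a, b⟩; exact ⟨by omega, b⟩
  set P := (Finset.Ioc 0 ⌊x⌋₊).filter Nat.Prime with hP
  have hcard : ((Nat.primeCounting ⌊x⌋₊ : ℕ) : ℝ) = ∑ p ∈ P, (1:ℝ) := by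
    rw [Nat.primeCounting, Nat.primeCounting', Nat.count_eq_card_filter_range, Finset.sum_const, nsmul_eq_mul, mul_one, ← hs]
  have hth : Chebyshev.theta x = ∑ p ∈ P, Real.log p := rfl
  have hple : ∀ p ∈ P, 0 ≤ Real.log x - Real.log p := by
    intro p hp
    have := (Finset.mem_filter.mp hp)
    have h2 := (Finset.mem_Ioc.mp this.1)
    have h3 : (p:ℝ) ≤ x := (Nat.le_floor_iff hx0.le).mp h2.2
    have h4 : (0:ℝ) < p := by exact_mod_cast h2.1
    linarith [Real.log_le_log h4 h3]
  have hdiff : (∑ p ∈ P, Int.fract (x / p)) * Real.log x - ∑ p ∈ P, Real.log p * Int.fract (x / p)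
      = ∑ p ∈ P, (Real.log x - Real.log p) * Int.fract (x / p) := by
    rw [Finset.sum_mul, ← Finset.sum_sub_distrib]
    apply Finset.sum_congr rfl; intro p _; ring
  have hd0 : 0 ≤ ∑ p ∈ P, (Real.log x - Real.log p) * Int.fract (x / p) :=
    Finset.sum_nonneg fun p hp => mul_nonneg (hple p hp) (Int.fract_nonneg _)
  have hd1 : ∑ p ∈ P, (Real.log x - Real.log p) * Int.fract (x / p) ≤ D * x / Real.log x := by
    calc _ ≤ ∑ p ∈ P, (Real.log x - Real.log p) := by
          apply Finset.sum_le_sum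
          intro p hp
          exact mul_le_of_le_one_right (hple p hp) (Int.fract_lt_one _).le
      _ = ((Nat.primeCounting ⌊x⌋₊ : ℕ) - Chebyshev.theta x / Real.log x) * Real.log x := by
          rw [hcard, hth, sub_mul, div_mul_cancel₀ _ hl.ne', Finset.sum_sub_distrib, Finset.sum_mul]
          simp
      _ ≤ (D * (x / Real.log x ^ 2)) * Real.log x := by
          gcongr
          rw [Real.norm_eq_abs, Real.norm_eq_abs, abs_of_pos (by positivity : 0 < x / Real.log x ^ 2)] at hx1
          exact (le_abs_self _).trans hx1
      _ = _ := by field_simp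
  have h1 := h x hx
  rw [hs]
  set S := ∑ p ∈ P, Int.fract (x / p)
  set γ := Real.eulerMascheroniConstant
  have e : S - (1 - γ) * x / Real.log x = (S * Real.log x - (1 - γ) * x) / Real.log x := by
    field_simp
  rw [e, abs_div, abs_of_pos hl, div_le_iff₀ hl]
  have e2 : (C + D) * x / Real.log x ^ 2 * Real.log x = C * x / Real.log x + D * x / Real.log x := by
    field_simp
  rw [e2]
  have : 0 ≤ D * x / Real.log x := by positivity
  rw [abs_le] at h1 ⊢
  constructor <;> linarith [h1.1, h1.2]
end

section
/- For every complex number z with Re(z) < 1 and z ≠ 0, the integral ∫₁^∞ {u}·u^{z-2} du converges and equals (1 − 1/z − ζ(1−z))/(1−z), where ζ is the Riemann zeta function; moreover, for every complex z with |z| < 1 and z ≠ 0, Σ_{n=0}^∞ c_n z^n = ∫₁^∞ {u}·u^{z-2} du. -/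
open Filter Real MeasureTheory
open scoped Classical

/-- `cconst n = (1/n!) ∫₁^∞ {u} (log u)^n / u² du`. -/
noncomputable def cconst (n : ℕ) : ℝ :=
  (1 / (n.factorial : ℝ)) * ∫ u in Set.Ioi (1:ℝ), Int.fract u * (Real.log u) ^ n / u ^ 2

noncomputable def fzG (u : ℝ) : ℂ := (Set.Ioi (1:ℝ)).indicator (fun u => ((Int.fract u : ℝ) : ℂ)) u

lemma fzG_meas : Measurable fzG := by
  unfold fzG
  exact (Complex.measurable_ofReal.comp measurable_fract).indicator measurableSet_Ioi

lemma fzG_le (u : ℝ) : ‖fzG u‖ ≤ 1 := by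
  unfold fzG
  refine (norm_indicator_le_norm_self _ _).trans ?_
  rw [Complex.norm_real, Real.norm_of_nonneg (Int.fract_nonneg u)]
  exact (Int.fract_lt_one u).le

lemma fzG_li : LocallyIntegrableOn fzG (Set.Ioi 0) := by
  have : LocallyIntegrable fzG volume :=
    (locallyIntegrable_const (1:ℝ)).mono fzG_meas.aestronglyMeasurable
      (Eventually.of_forall fun u => by simpa using fzG_le u)
  exact this.locallyIntegrableOn _

lemma fzG_top : fzG =O[atTop] fun x : ℝ => x ^ (-(0:ℝ)) := by
  simp only [neg_zero, Real.rpow_zero]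
  exact Asymptotics.isBigO_of_le _ fun u => by simpa using fzG_le u

lemma fzG_zero (b : ℝ) : fzG =O[nhdsWithin 0 (Set.Ioi 0)] fun x : ℝ => x ^ (-b) := by
  have : fzG =ᶠ[nhdsWithin 0 (Set.Ioi 0)] fun _ => 0 := by
    filter_upwards [mem_nhdsWithin_of_mem_nhds (Iio_mem_nhds (zero_lt_one (α := ℝ)))] with u hu
    have : ¬ (1 < u) := not_lt.2 (le_of_lt hu)
    simp [fzG, this]
  exact this.trans_isBigO (Asymptotics.isBigO_zero _ _)

lemma fz_ind (z : ℂ) : (fun t : ℝ => (t : ℂ) ^ (z - 1 - 1) • fzG t) =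
    (Set.Ioi (1:ℝ)).indicator (fun u : ℝ => ((Int.fract u : ℝ) : ℂ) * (u : ℂ) ^ (z - 2)) := by
  ext t
  have : z - 1 - 1 = z - 2 := by ring
  rw [this]
  by_cases h : t ∈ Set.Ioi (1:ℝ)
  · simp [fzG, Set.indicator_of_mem h, mul_comm]
  · simp [fzG, Set.indicator_of_notMem h]

lemma fz_int {z : ℂ} (hz : z.re < 1) :
    IntegrableOn (fun u : ℝ => ((Int.fract u : ℝ) : ℂ) * (u : ℂ) ^ (z - 2)) (Set.Ioi (1:ℝ)) := by
  have h : MellinConvergent fzG (z - 1) :=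
    mellinConvergent_of_isBigO_rpow fzG_li fzG_top (by simpa using hz)
      (fzG_zero ((z - 1).re - 1)) (by linarith)
  unfold MellinConvergent at h
  rw [fz_ind, IntegrableOn, integrable_indicator_iff measurableSet_Ioi, IntegrableOn,
    Measure.restrict_restrict measurableSet_Ioi, Set.Ioi_inter_Ioi] at h
  simpa [IntegrableOn] using h

lemma fz_mellin (z : ℂ) : mellin fzG (z - 1) =
    ∫ u in Set.Ioi (1:ℝ), ((Int.fract u : ℝ) : ℂ) * (u : ℂ) ^ (z - 2) := by
  unfold mellin
  rw [fz_ind, integral_indicator measurableSet_Ioi,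
    Measure.restrict_restrict measurableSet_Ioi, Set.Ioi_inter_Ioi]
  simp

lemma fz_diff {z : ℂ} (hz : z.re < 1) :
    DifferentiableAt ℂ (fun z => mellin fzG (z - 1)) z := by
  have h : DifferentiableAt ℂ (mellin fzG) (z - 1) :=
    mellin_differentiableAt_of_isBigO_rpow fzG_li fzG_top (by simpa using hz)
      (fzG_zero ((z - 1).re - 1)) (by linarith)
  exact DifferentiableAt.comp (f := fun z : ℂ => z - 1) z h (by fun_prop)

lemma fz_neg {z : ℂ} (hz : z.re < 0) :
    (∫ u in Set.Ioi (1:ℝ), ((Int.fract u : ℝ) : ℂ) * (u : ℂ) ^ (z - 2)) =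
      -1 / z - riemannZeta (1 - z) / (1 - z) := by
  have h1 : 1 < (1 - z).re := by simp; linarith
  have hz1 : 1 - z ≠ 0 := fun h => by rw [h] at h1; simp at h1; linarith
  have key := LSeries_eq_mul_integral 1 zero_le_one h1 (LSeriesSummable_one_iff.mpr h1) (by
    simp only [Pi.one_apply, Finset.sum_const, Nat.card_Icc, Real.rpow_one]
    exact Asymptotics.isBigO_of_le _ fun n => by simp)
  rw [LSeries_one_eq_riemannZeta h1] at key
  have i1 : IntegrableOn (fun t : ℝ => (t : ℂ) ^ (z - 1)) (Set.Ioi 1) :=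
    integrableOn_Ioi_cpow_of_lt (by simp; linarith) one_pos
  have e1 := integral_Ioi_cpow_of_lt (a := z - 1) (by simp; linarith) one_pos
  have i2 := fz_int (z := z) (by linarith)
  have e2 : (∫ t in Set.Ioi (1 : ℝ), (∑ k ∈ Finset.Icc 1 ⌊t⌋₊, (1 : ℕ → ℂ) k) * (t : ℂ) ^ (-(1 - z + 1)))
      = ∫ t in Set.Ioi (1 : ℝ), ((t : ℂ) ^ (z - 1) - ((Int.fract t : ℝ) : ℂ) * (t : ℂ) ^ (z - 2)) := by
    refine setIntegral_congr_fun measurableSet_Ioi fun t ht => ?_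
    have ht0 : (0:ℝ) < t := lt_trans one_pos ht
    have htc : (t : ℂ) ≠ 0 := by exact_mod_cast ht0.ne'
    have a1 : (t : ℂ) ^ (z - 1) = t * (t : ℂ) ^ (z - 2) := by
      rw [show z - 1 = 1 + (z - 2) by ring, Complex.cpow_add _ _ htc, Complex.cpow_one]
    have a2 : (⌊t⌋₊ : ℂ) = t - ((Int.fract t : ℝ) : ℂ) := by
      have : ((⌊t⌋₊ : ℝ)) = t - Int.fract t := by
        rw [natCast_floor_eq_intCast_floor ht0.le]
        linarith [Int.floor_add_fract t]
      rw [← Complex.ofReal_sub, ← this]; simp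
    have a3 : -(1 - z + 1) = z - 2 := by ring
    simp only [Pi.one_apply, Finset.sum_const, Nat.card_Icc, Nat.add_sub_cancel, nsmul_eq_mul,
      mul_one]
    rw [a1, a2, a3]; ring
  rw [e2, integral_sub i1 i2, e1] at key
  rw [key]
  simp only [Complex.ofReal_one, Complex.one_cpow, sub_add_cancel]
  field_simp
  ring

lemma fz_eq {z : ℂ} (hz : z.re < 1) (h0 : z ≠ 0) :
    (∫ u in Set.Ioi (1:ℝ), ((Int.fract u : ℝ) : ℂ) * (u : ℂ) ^ (z - 2)) =
      (1 - 1 / z - riemannZeta (1 - z)) / (1 - z) := by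
  have ho : IsOpen {z : ℂ | z.re < 1} := isOpen_lt Complex.continuous_re continuous_const
  have zz : ∀ z : ℂ, z ≠ 0 → riemannZeta₁ (1 - z) = - z * riemannZeta (1 - z) := fun z h => by
    rw [riemannZeta_eq_inv_sub_mul (s := 1 - z) (by simpa using h)]
    rw [show 1 - z - 1 = -z by ring]
    field_simp
  have H : Set.EqOn (fun z => z * (1 - z) * mellin fzG (z - 1))
      (fun z => z - 1 + riemannZeta₁ (1 - z)) {z : ℂ | z.re < 1} := by
    refine AnalyticOnNhd.eqOn_of_preconnected_of_eventuallyEq (𝕜 := ℂ) (z₀ := -1) ?_ ?_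
      (convex_halfSpace_re_lt 1).isPreconnected (by simp) ?_
    · refine DifferentiableOn.analyticOnNhd (fun z hz => ?_) ho
      exact (DifferentiableAt.mul (by fun_prop) (fz_diff hz)).differentiableWithinAt
    · refine DifferentiableOn.analyticOnNhd (fun z hz => ?_) ho
      have := differentiable_riemannZeta₁
      fun_prop
    · have : {z : ℂ | z.re < 0} ∈ nhds (-1 : ℂ) :=
        (isOpen_lt Complex.continuous_re continuous_const).mem_nhds (by simp)
      filter_upwards [this] with w hw
      have hw : w.re < 0 := hw
      have w0 : w ≠ 0 := fun h => by simp [h] at hw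
      have w1 : 1 - w ≠ 0 := fun h => by
        rw [sub_eq_zero] at h; rw [← h] at hw; simp at hw; linarith
      rw [fz_mellin, fz_neg hw, zz w w0]
      field_simp
      ring
  have z1 : 1 - z ≠ 0 := fun h => by
    rw [sub_eq_zero] at h; rw [← h] at hz; simp at hz
  have := H hz
  simp only [fz_mellin] at this
  rw [zz z h0] at this
  rw [eq_div_iff z1]
  apply mul_left_cancel₀ h0
  field_simp
  linear_combination this

lemma fz_sum {z : ℂ} (hz : ‖z‖ < 1) : HasSum (fun n : ℕ => (cconst n : ℂ) * z ^ n)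
          (∫ u in Set.Ioi (1:ℝ), ((Int.fract u : ℝ) : ℂ) * (u : ℂ) ^ (z - 2)) := by
  have hb : ∀ u : ℝ, 1 < u →
      HasSum (fun n : ℕ => (‖z‖ * Real.log u) ^ n / (n.factorial : ℝ) * u ^ (-2:ℝ)) (u ^ (‖z‖ - 2)) := by
    intro u hu
    have h := (NormedSpace.expSeries_div_hasSum_exp (‖z‖ * Real.log u)).mul_right (u ^ (-2:ℝ))
    rwa [← Real.exp_eq_exp_ℝ, mul_comm ‖z‖, ← Real.rpow_def_of_pos (by linarith),
      ← Real.rpow_add (by linarith), ← sub_eq_add_neg, mul_comm (Real.log u)] at h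
  have := hasSum_integral_of_dominated_convergence (μ := volume.restrict (Set.Ioi (1:ℝ)))
    (F := fun (n : ℕ) (u : ℝ) => (((1 / (n.factorial : ℝ)) *
      (Int.fract u * (Real.log u) ^ n / u ^ 2) : ℝ) : ℂ) * z ^ n)
    (f := fun u => ((Int.fract u : ℝ) : ℂ) * (u : ℂ) ^ (z - 2))
    (fun n u => (‖z‖ * Real.log u) ^ n / (n.factorial : ℝ) * u ^ (-2:ℝ)) ?_ ?_ ?_ ?_ ?_
  · have e : (fun n : ℕ => (cconst n : ℂ) * z ^ n) = fun n : ℕ => ∫ u in Set.Ioi (1:ℝ),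
        (((1 / (n.factorial : ℝ)) * (Int.fract u * (Real.log u) ^ n / u ^ 2) : ℝ) : ℂ) * z ^ n := by
      ext n
      rw [integral_mul_const, integral_complex_ofReal, integral_const_mul, cconst]
    rw [e]
    exact this
  · intro n
    have : Measurable (fun u : ℝ => (1 / (n.factorial : ℝ)) *
      (Int.fract u * (Real.log u) ^ n / u ^ 2)) := by
      have := measurable_fract (R := ℝ)
      fun_prop
    exact ((Complex.measurable_ofReal.comp this).mul_const _).aestronglyMeasurable
  · intro n
    filter_upwards [ae_restrict_mem measurableSet_Ioi] with u hu
    have hu : 1 < u := hu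
    have hl := Real.log_pos hu
    have f0 := Int.fract_nonneg u
    rw [norm_mul, norm_pow, Complex.norm_real, Real.norm_of_nonneg (by positivity),
      Real.rpow_neg (by linarith), Real.rpow_two, mul_pow]
    have : 0 ≤ ‖z‖ ^ n * Real.log u ^ n / (n.factorial : ℝ) * (u ^ 2)⁻¹ := by positivity
    calc _ = Int.fract u * (‖z‖ ^ n * Real.log u ^ n / (n.factorial : ℝ) * (u ^ 2)⁻¹) := by ring
      _ ≤ _ := mul_le_of_le_one_left this (Int.fract_lt_one u).le
  · filter_upwards [ae_restrict_mem measurableSet_Ioi] with u hu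
    exact (hb u hu).summable
  · refine Integrable.congr (integrableOn_Ioi_rpow_of_lt (a := ‖z‖ - 2) (by linarith) one_pos) ?_
    filter_upwards [ae_restrict_mem measurableSet_Ioi] with u hu
    exact (hb u hu).tsum_eq.symm
  · filter_upwards [ae_restrict_mem measurableSet_Ioi] with u hu
    have hu : 1 < u := hu
    have u0 : 0 < u := by linarith
    have uc : (u : ℂ) ≠ 0 := by exact_mod_cast u0.ne'
    have h := (NormedSpace.expSeries_div_hasSum_exp ((Real.log u : ℂ) * z)).mul_left
      (((Int.fract u : ℝ) : ℂ) * ((u : ℂ) ^ 2)⁻¹)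
    rw [← Complex.exp_eq_exp_ℂ, Complex.ofReal_log u0.le, ← Complex.cpow_def_of_ne_zero uc] at h
    have e1 : (fun n : ℕ => (((1 / (n.factorial : ℝ)) *
        (Int.fract u * (Real.log u) ^ n / u ^ 2) : ℝ) : ℂ) * z ^ n) = fun n : ℕ =>
        ((Int.fract u : ℝ) : ℂ) * ((u : ℂ) ^ 2)⁻¹ * ((Complex.log u * z) ^ n / (n.factorial : ℂ)) := by
      ext n
      push_cast [Complex.ofReal_log u0.le]
      ring
    have e2 : ((Int.fract u : ℝ) : ℂ) * (u : ℂ) ^ (z - 2) =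
        ((Int.fract u : ℝ) : ℂ) * ((u : ℂ) ^ 2)⁻¹ * (u : ℂ) ^ z := by
      rw [Complex.cpow_sub _ _ uc, Complex.cpow_ofNat]
      ring
    rw [e1, e2]
    exact h

theorem fract_integral_zeta :
    (∀ z : ℂ, z.re < 1 → z ≠ 0 →
        MeasureTheory.IntegrableOn (fun u : ℝ => ((Int.fract u : ℝ) : ℂ) * (u : ℂ) ^ (z - 2))
          (Set.Ioi (1:ℝ)) ∧
        (∫ u in Set.Ioi (1:ℝ), ((Int.fract u : ℝ) : ℂ) * (u : ℂ) ^ (z - 2)) =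
          (1 - 1 / z - riemannZeta (1 - z)) / (1 - z)) ∧
    (∀ z : ℂ, ‖z‖ < 1 → z ≠ 0 →
        HasSum (fun n : ℕ => (cconst n : ℂ) * z ^ n)
          (∫ u in Set.Ioi (1:ℝ), ((Int.fract u : ℝ) : ℂ) * (u : ℂ) ^ (z - 2))) := by
  exact ⟨fun z hz h0 => ⟨fz_int hz, fz_eq hz h0⟩, fun z hz _ => fz_sum hz⟩
end

section
/- For every integer n ≥ 0, c_n = 1 − Σ_{j=0}^{n} γ_j/j!, where γ_j is the j-th Stieltjes constant; precisely, there exist real numbers γ_0, γ_1, …, γ_n such that for each 0 ≤ j ≤ n the quantity Σ_{k=1}^{m} (log k)^j/k − (log m)^{j+1}/(j+1) converges to γ_j as m → ∞, and c_n = 1 − Σ_{j=0}^{n} γ_j/j!. -/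
open Filter Real MeasureTheory
open scoped Classical

noncomputable def auxF (n : ℕ) (u : ℝ) : ℝ :=
  ∑ j ∈ Finset.range (n + 1), (Real.log u) ^ j / (j.factorial : ℝ) / u

noncomputable def auxG (n : ℕ) (u : ℝ) : ℝ :=
  ∑ j ∈ Finset.range (n + 1), (Real.log u) ^ (j + 1) / (j + 1) / (j.factorial : ℝ)

theorem auxF_deriv (n : ℕ) (u : ℝ) (hu : 0 < u) :
    HasDerivAt (auxF n) (-((Real.log u) ^ n / u ^ 2 / (n.factorial : ℝ))) u := by
  have hl := Real.hasDerivAt_log hu.ne'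
  induction n with
  | zero =>
    have h := hasDerivAt_inv hu.ne'
    have e : auxF 0 = fun u => u⁻¹ := by
      funext x; simp [auxF]
    rw [e]
    refine h.congr_deriv ?_
    simp
  | succ n ih =>
    have e : auxF (n + 1) =
        fun x => auxF n x + (Real.log x) ^ (n + 1) / ((n + 1).factorial : ℝ) / x := by
      funext x; simp only [auxF]; rw [Finset.sum_range_succ]
    rw [e]
    have h2 := ((hl.pow (n + 1)).div_const ((n + 1).factorial : ℝ)).div (hasDerivAt_id u) hu.ne'
    refine (ih.add h2).congr_deriv ?_
    have hf : (n.factorial : ℝ) ≠ 0 := by positivity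
    have hn : (n : ℝ) + 1 ≠ 0 := by positivity
    rw [Nat.factorial_succ]
    simp
    field_simp
    ring

theorem auxG_deriv (n : ℕ) (u : ℝ) (hu : 0 < u) :
    HasDerivAt (auxG n) (auxF n u) u := by
  have hl := Real.hasDerivAt_log hu.ne'
  unfold auxG auxF
  refine HasDerivAt.fun_sum fun j _ => ?_
  refine (((hl.pow (j + 1)).div_const ((j : ℝ) + 1)).div_const (j.factorial : ℝ)).congr_deriv ?_
  have hn : (j : ℝ) + 1 ≠ 0 := by positivity
  simp
  field_simp

theorem auxF_tendsto (n : ℕ) : Tendsto (auxF n) atTop (nhds 0) := by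
  unfold auxF
  have : (0 : ℝ) = ∑ j ∈ Finset.range (n + 1), (0 : ℝ) / (j.factorial : ℝ) := by simp
  rw [this]
  refine tendsto_finsetSum _ fun j _ => ?_
  have h := (isLittleO_pow_log_id_atTop (n := j)).tendsto_div_nhds_zero
  refine (h.div_const (j.factorial : ℝ)).congr fun x => ?_
  simp only [id]
  ring

theorem aux_integrable0 (n : ℕ) :
    IntegrableOn (fun u : ℝ => (Real.log u) ^ n / u ^ 2 / (n.factorial : ℝ)) (Set.Ioi 1) := by
  refine integrableOn_Ioi_deriv_of_nonneg' (g := fun u => - auxF n u) (l := -0)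
    (fun x hx => ?_) (fun x hx => ?_) ((auxF_tendsto n).neg)
  · have hx0 : (0 : ℝ) < x := lt_of_lt_of_le one_pos hx
    simpa using (auxF_deriv n x hx0).fun_neg
  · have := Real.log_nonneg (le_of_lt hx)
    positivity

theorem aux_integrable (n : ℕ) :
    IntegrableOn (fun u : ℝ => Int.fract u * (Real.log u) ^ n / u ^ 2) (Set.Ioi 1) := by
  refine Integrable.mono ((aux_integrable0 n).const_mul (n.factorial : ℝ)) ?_ ?_
  · refine Measurable.aestronglyMeasurable ?_
    exact (measurable_fract.mul (Real.measurable_log.pow_const n)).div (measurable_id.pow_const 2)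
  · refine Eventually.of_forall fun u => ?_
    have hf : (n.factorial : ℝ) ≠ 0 := by positivity
    have e : (n.factorial : ℝ) * ((Real.log u) ^ n / u ^ 2 / (n.factorial : ℝ))
      = (Real.log u) ^ n / u ^ 2 := by field_simp
    rw [e, mul_div_assoc, norm_mul]
    refine mul_le_of_le_one_left (norm_nonneg _) ?_
    rw [Real.norm_eq_abs, abs_of_nonneg (Int.fract_nonneg u)]
    exact (Int.fract_lt_one u).le

theorem aux_step (n k : ℕ) (hk : 1 ≤ k) :
    ∫ u in (k : ℝ)..((k + 1 : ℕ) : ℝ), Int.fract u * (Real.log u) ^ n / u ^ 2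
      = (n.factorial : ℝ) * (auxG n (k + 1 : ℕ) - auxG n k - auxF n (k + 1 : ℕ)) := by
  have hk0 : (1 : ℝ) ≤ k := by exact_mod_cast hk
  have hle : (k : ℝ) ≤ ((k + 1 : ℕ) : ℝ) := by push_cast; linarith
  have hf : (n.factorial : ℝ) ≠ 0 := by positivity
  have h1 : ∫ u in (k : ℝ)..((k + 1 : ℕ) : ℝ), Int.fract u * (Real.log u) ^ n / u ^ 2
      = ∫ u in (k : ℝ)..((k + 1 : ℕ) : ℝ), (u - k) * (Real.log u) ^ n / u ^ 2 := by
    rw [intervalIntegral.integral_of_le hle, intervalIntegral.integral_of_le hle,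
      integral_Ioc_eq_integral_Ioo, integral_Ioc_eq_integral_Ioo]
    refine setIntegral_congr_fun measurableSet_Ioo fun u hu => ?_
    have : ⌊u⌋ = (k : ℤ) := by
      rw [Int.floor_eq_iff]
      have := hu.1; have := hu.2
      push_cast at *
      constructor <;> linarith
    simp only [Int.fract, this]
    push_cast
    rfl
  rw [h1]
  have hpos : ∀ x ∈ Set.uIcc (k : ℝ) ((k + 1 : ℕ) : ℝ), 0 < x := by
    intro x hx
    rw [Set.uIcc_of_le hle] at hx
    linarith [hx.1]
  rw [intervalIntegral.integral_eq_sub_of_hasDerivAt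
    (f := fun u => (n.factorial : ℝ) * (auxG n u - (u - k) * auxF n u))]
  · push_cast; ring
  · intro x hx
    have hx0 := hpos x hx
    refine (((auxG_deriv n x hx0).sub (((hasDerivAt_id x).sub_const (k : ℝ)).mul
      (auxF_deriv n x hx0))).const_mul (n.factorial : ℝ)).congr_deriv ?_
    simp
    field_simp
  · refine ContinuousOn.intervalIntegrable fun x hx => ?_
    have hx0 := (hpos x hx).ne'
    refine ContinuousAt.continuousWithinAt ?_
    refine ContinuousAt.div ?_ (by fun_prop) (by positivity)
    exact (by fun_prop : ContinuousAt (fun u : ℝ => u - k) x).mul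
      ((Real.continuousAt_log hx0).pow n)

theorem aux_sum (n m : ℕ) (hm : 1 ≤ m) :
    ∫ u in (1 : ℝ)..(m : ℝ), Int.fract u * (Real.log u) ^ n / u ^ 2
      = (n.factorial : ℝ) * (1 + auxG n m - ∑ k ∈ Finset.Icc 1 m, auxF n k) := by
  have hint : ∀ a b : ℝ, 1 ≤ a → a ≤ b → IntervalIntegrable
      (fun u : ℝ => Int.fract u * (Real.log u) ^ n / u ^ 2) volume a b := by
    intro a b ha hab
    rw [intervalIntegrable_iff_integrableOn_Ioc_of_le hab]
    exact (aux_integrable n).mono_set fun x hx => lt_of_le_of_lt ha hx.1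
  induction m, hm using Nat.le_induction with
  | base =>
    have hG : auxG n 1 = 0 := by simp [auxG]
    have hF : auxF n 1 = 1 := by
      simp [auxF, Finset.sum_range_succ']
    simp [hG, hF]
  | succ k hk ih =>
    have hk0 : (1 : ℝ) ≤ k := by exact_mod_cast hk
    rw [← intervalIntegral.integral_add_adjacent_intervals (hint 1 k le_rfl hk0)
      (hint k (k + 1 : ℕ) hk0 (by push_cast; linarith)), ih, aux_step n k hk,
      Finset.sum_Icc_succ_top (by omega)]
    ring

theorem aux_tendsto (n : ℕ) : Tendsto (fun m : ℕ => ∑ j ∈ Finset.range (n + 1),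
      ((∑ k ∈ Finset.Icc 1 m, (Real.log k) ^ j / k) -
              (Real.log m) ^ (j + 1) / (j + 1)) / (j.factorial : ℝ)) atTop
      (nhds (1 - cconst n)) := by
  have hf : (n.factorial : ℝ) ≠ 0 := by positivity
  have h := intervalIntegral_tendsto_integral_Ioi 1 (aux_integrable n)
    (tendsto_natCast_atTop_atTop (R := ℝ))
  have h2 := (h.const_mul (1 / (n.factorial : ℝ))).const_sub 1
  refine h2.congr' ?_
  filter_upwards [eventually_ge_atTop 1] with m hm
  rw [aux_sum n m hm]
  unfold auxF auxG
  rw [Finset.sum_comm, ← mul_assoc, one_div_mul_cancel hf, one_mul]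
  simp only [sub_div, Finset.sum_sub_distrib, Finset.sum_div]
  have e : ∀ j ∈ Finset.range (n + 1), ∑ k ∈ Finset.Icc 1 m, (Real.log k) ^ j / (j.factorial : ℝ) / k
     = ∑ k ∈ Finset.Icc 1 m, (Real.log k) ^ j / k / (j.factorial : ℝ) := fun j _ =>
    Finset.sum_congr rfl fun k _ => div_right_comm _ _ _
  rw [Finset.sum_congr rfl e]
  ring

theorem cconst_eq_stieltjes :
    ∀ n : ℕ, ∃ γs : ℕ → ℝ,
      (∀ j ≤ n, Filter.Tendsto
          (fun m : ℕ =>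
            (∑ k ∈ Finset.Icc 1 m, (Real.log k) ^ j / k) -
              (Real.log m) ^ (j + 1) / (j + 1))
          atTop (nhds (γs j))) ∧
      cconst n = 1 - ∑ j ∈ Finset.range (n + 1), γs j / (j.factorial : ℝ) := by
  intro n
  have key : ∀ j : ℕ, ∃ g : ℝ, Filter.Tendsto
          (fun m : ℕ =>
            (∑ k ∈ Finset.Icc 1 m, (Real.log k) ^ j / k) -
              (Real.log m) ^ (j + 1) / (j + 1))
          atTop (nhds g) := by
    intro j
    have hf : (j.factorial : ℝ) ≠ 0 := by positivity
    cases j with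
    | zero =>
      refine ⟨_, (aux_tendsto 0).congr fun m => ?_⟩
      rw [Finset.sum_range_one]
      simp
    | succ j =>
      refine ⟨_, (((aux_tendsto (j + 1)).sub (aux_tendsto j)).mul_const
        ((j + 1).factorial : ℝ)).congr fun m => ?_⟩
      rw [Finset.sum_range_succ _ (j + 1), add_sub_cancel_left, div_mul_cancel₀ _ hf]
  choose g hg using key
  refine ⟨g, fun j _ => hg j, ?_⟩
  have h := tendsto_nhds_unique (aux_tendsto n)
    (tendsto_finsetSum (Finset.range (n + 1)) fun j _ => (hg j).div_const (j.factorial : ℝ))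
  linarith
end

section
/- For every real x ≥ 2 and every integer B with 1 < B ≤ x, Σ_{x/B < p ≤ x} ⌊x/p⌋ = Σ_{n=1}^{B-1} (π(x/n) − π(x/B)), where the first sum is over primes p with x/B < p ≤ x and π(t) denotes the number of primes ≤ t. -/
open Filter Real
open scoped Classical

/-- The prime counting function: the number of primes `p ≤ t`. -/
noncomputable def primePi (t : ℝ) : ℕ := ((Finset.range (⌊t⌋₊ + 1)).filter Nat.Prime).card

theorem hyperbola_method :
    ∀ x : ℝ, 2 ≤ x → ∀ B : ℕ, 1 < B → (B : ℝ) ≤ x →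
      (∑ p ∈ (Finset.range (⌊x⌋₊ + 1)).filter (fun p : ℕ => p.Prime ∧ x / B < (p : ℝ)),
          (⌊x / p⌋ : ℤ)) =
        ∑ n ∈ Finset.Icc 1 (B - 1), ((primePi (x / n) : ℤ) - (primePi (x / B) : ℤ)) := by
  intro x hx B hB hBx
  have hx0 : (0:ℝ) < x := by linarith
  have hB0 : (0:ℝ) < B := by exact_mod_cast (by omega : 0 < B)
  have h1 : ∀ p ∈ (Finset.range (⌊x⌋₊ + 1)).filter (fun p : ℕ => p.Prime ∧ x / B < (p : ℝ)),
      (⌊x / p⌋ : ℤ) = ∑ n ∈ Finset.Icc 1 (B - 1), if (p : ℝ) ≤ x / n then (1 : ℤ) else 0 := by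
    intro p hp
    rw [Finset.mem_filter] at hp
    obtain ⟨-, hpp, hlt⟩ := hp
    have hp0 : (0:ℝ) < p := by exact_mod_cast hpp.pos
    have hfl : ⌊x / p⌋₊ < B := by
      rw [Nat.floor_lt (by positivity)]
      rw [div_lt_iff₀ hB0] at hlt
      rw [div_lt_iff₀ hp0]
      linarith
    rw [Finset.sum_boole]
    have hset : (Finset.Icc 1 (B - 1)).filter (fun n : ℕ => (p : ℝ) ≤ x / n)
        = Finset.Icc 1 ⌊x / p⌋₊ := by
      ext n
      simp only [Finset.mem_filter, Finset.mem_Icc]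
      have key : 1 ≤ n → ((p : ℝ) ≤ x / n ↔ n ≤ ⌊x / p⌋₊) := by
        intro hn
        have hn0 : (0:ℝ) < n := by exact_mod_cast hn
        rw [Nat.le_floor_iff (by positivity), le_div_iff₀ hn0, le_div_iff₀ hp0, mul_comm]
      constructor
      · rintro ⟨⟨a, b⟩, c⟩
        exact ⟨a, (key a).1 c⟩
      · rintro ⟨a, b⟩
        exact ⟨⟨a, by omega⟩, (key a).2 b⟩
    rw [hset, Nat.card_Icc, Nat.add_sub_cancel]
    exact (Int.natCast_floor_eq_floor (by positivity)).symm
  rw [Finset.sum_congr rfl h1, Finset.sum_comm]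
  refine Finset.sum_congr rfl fun n hn => ?_
  rw [Finset.mem_Icc] at hn
  have hn1 : (1:ℝ) ≤ n := by exact_mod_cast hn.1
  have hnB : (n:ℝ) ≤ B := by exact_mod_cast (by omega : n ≤ B)
  have hle : x / B ≤ x / n := div_le_div_of_nonneg_left hx0.le (by linarith) hnB
  have hle1 : x / n ≤ x := div_le_self hx0.le hn1
  rw [Finset.sum_boole, eq_sub_iff_add_eq]
  have mem : ∀ t : ℝ, 0 ≤ t → ∀ p : ℕ, p ∈ Finset.range (⌊t⌋₊ + 1) ↔ (p : ℝ) ≤ t := by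
    intro t ht p
    rw [Finset.mem_range, Nat.lt_succ_iff, Nat.le_floor_iff ht]
  have hxB : 0 ≤ x / B := by positivity
  unfold primePi
  norm_cast
  rw [← Finset.card_union_of_disjoint]
  · congr 1
    ext p
    simp only [Finset.mem_union, Finset.mem_filter, mem x hx0.le, mem _ hxB,
      mem _ (hxB.trans hle)]
    constructor
    · rintro (⟨⟨a, b, c⟩, d⟩ | ⟨a, b⟩)
      · exact ⟨d, b⟩
      · exact ⟨a.trans hle, b⟩
    · rintro ⟨a, b⟩
      rcases lt_or_ge (x / B) (p : ℝ) with h | h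
      · exact Or.inl ⟨⟨a.trans hle1, b, h⟩, a⟩
      · exact Or.inr ⟨h, b⟩
  · rw [Finset.disjoint_left]
    intro p hp hq
    simp only [Finset.mem_filter, mem x hx0.le, mem _ hxB] at hp hq
    exact absurd hq.1 (not_le.2 hp.1.2.2)
end
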